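/- arXiv:1104.5185 — 2 statements merged into one kernel-verified Lean document; each statement's English description precedes it below -/
import Mathlib

section
/- Let H₁, H₂, …, H_p be pairwise commuting essential homeomorphisms of ℝ² and let (q_i)_{1≤i≤p} be a family of positive integers. If there is an essential line Γ in ℝ² such that Γ < H_i^{q_i}(Γ) for every i ∈ {1, …, p}, then there is an essential line Γ' in ℝ² such that Γ' < H_i(Γ') for every i ∈ {1, …, p}. -/
open Filter Topology Set

noncomputable section

/-- The plane ℝ². -/
abbrev Plane := ℝ × ℝ

/-- The open annulus 𝔸 = ℝ/ℤ × ℝ. -/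
abbrev Ann := AddCircle (1 : ℝ) × ℝ

/-- The covering map π : ℝ² → 𝔸, (x,y) ↦ (x + ℤ, y). -/
def prj : Plane → Ann := fun p => ((p.1 : AddCircle (1 : ℝ)), p.2)

/-- The deck transformation T^k : ℝ² → ℝ², (x,y) ↦ (x + k, y). -/
def Tr (k : ℤ) : Plane → Plane := fun p => (p.1 + (k : ℝ), p.2)

/-- `F` is a lift of `f` to the universal cover ℝ² of the annulus. -/
def IsLift (f : Ann ≃ₜ Ann) (F : Plane ≃ₜ Plane) : Prop :=
  ∀ p : Plane, prj (F p) = f (prj p)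

/-- `f` is isotopic to the identity: there is a continuous family of homeomorphisms
joining the identity to `f`. -/
def IsotopicToId (f : Ann ≃ₜ Ann) : Prop :=
  ∃ H : ℝ → Ann → Ann,
    Continuous (fun q : ℝ × Ann => H q.1 q.2) ∧
    (∀ t : ℝ, ∃ h : Ann ≃ₜ Ann, ∀ z, H t z = h z) ∧
    (∀ z, H 0 z = z) ∧ (∀ z, H 1 z = f z)

/-- An essential circle in 𝔸: a simple closed curve which is not null-homotopic. -/
def IsEssentialCircle (c : Set Ann) : Prop :=
  ∃ φ : C(AddCircle (1 : ℝ), Ann), Function.Injective φ ∧ Set.range φ = c ∧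
    ¬ ∃ pt : Ann, φ.Homotopic (ContinuousMap.const _ pt)

/-- `f` has the intersection property: every essential circle meets its image. -/
def IntersectionProperty (f : Ann → Ann) : Prop :=
  ∀ c : Set Ann, IsEssentialCircle c → (c ∩ f '' c).Nonempty

/-- `z` is a positively recurrent point of `g`: some subsequence of the forward orbit
of `z` converges to `z`. -/
def PosRec {X : Type*} [TopologicalSpace X] (g : X → X) (z : X) : Prop :=
  ∃ φ : ℕ → ℕ, StrictMono φ ∧ Tendsto (fun k => g^[φ k] z) atTop (𝓝 z)

/-- The positively recurrent point `z` has rotation number `ρ` for the lift `F` of `f`. -/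
def HasRotNum (f : Ann → Ann) (F : Plane → Plane) (z : Ann) (ρ : ℝ) : Prop :=
  PosRec f z ∧
    ∀ zt : Plane, prj zt = z →
      ∀ φ : ℕ → ℕ, StrictMono φ →
        Tendsto (fun k => f^[φ k] z) atTop (𝓝 z) →
        Tendsto (fun k => ((F^[φ k] zt).1 - zt.1) / (φ k : ℝ)) atTop (𝓝 ρ)

/-- The rotation set Rot(F): the set of rotation numbers of positively recurrent
points of `f`. -/
def Rot (f : Ann → Ann) (F : Plane → Plane) : Set ℝ := {ρ | ∃ z, HasRotNum f F z ρ}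

/-- The region `L(Γ)` of the plane on the left (west) of a line `Γ` (as a subset of ℝ²):
points lying in the connected component of the complement of `Γ` containing all far-west
points of the horizontal axis. -/
def Lset (Γ : Set Plane) : Set Plane :=
  {p | ∃ s : ℝ, ∀ x ≤ s, p ∈ connectedComponentIn Γᶜ ((x, 0) : Plane)}

/-- The region `R(Γ)` of the plane on the right (east) of a line `Γ`. -/
def Rset (Γ : Set Plane) : Set Plane :=
  {p | ∃ s : ℝ, ∀ x ≥ s, p ∈ connectedComponentIn Γᶜ ((x, 0) : Plane)}

/-- The relation `Γ₁ < Γ₂` on (essential, oriented from south to north) lines: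
`Cl(L(Γ₁)) ⊆ L(Γ₂)`. -/
def lineLT (Γ₁ Γ₂ : Set Plane) : Prop := closure (Lset Γ₁) ⊆ Lset Γ₂

/-- An essential line in ℝ², oriented from south to north: a properly embedded copy of ℝ
whose second coordinate tends to ±∞ at ±∞. -/
def IsEssLinePlane (Γ : ℝ → Plane) : Prop :=
  Continuous Γ ∧ Function.Injective Γ ∧ IsProperMap Γ ∧
    Tendsto (fun t => (Γ t).2) atTop atTop ∧ Tendsto (fun t => (Γ t).2) atBot atBot

/-- An essential line in the annulus 𝔸: a properly embedded simple path joining one end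
to the other. -/
def IsEssLineAnn (γ : ℝ → Ann) : Prop :=
  Continuous γ ∧ Function.Injective γ ∧ IsProperMap γ ∧
    ((Tendsto (fun t => (γ t).2) atTop atTop ∧ Tendsto (fun t => (γ t).2) atBot atBot) ∨
     (Tendsto (fun t => (γ t).2) atTop atBot ∧ Tendsto (fun t => (γ t).2) atBot atTop))

/-- An oriented essential line in 𝔸 joining the lower end S to the upper end N. -/
def IsEssLineAnnSN (γ : ℝ → Ann) : Prop :=
  Continuous γ ∧ Function.Injective γ ∧ IsProperMap γ ∧
    Tendsto (fun t => (γ t).2) atTop atTop ∧ Tendsto (fun t => (γ t).2) atBot atBot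

/-- An essential homeomorphism of the plane, orientation preserving: it maps every
(south-to-north oriented) essential line to an essential line and preserves the left
regions of essential lines. -/
def EssentialHomeo (H : Plane ≃ₜ Plane) : Prop :=
  (∀ Γ : ℝ → Plane, IsEssLinePlane Γ → IsEssLinePlane (⇑H ∘ Γ)) ∧
  (∀ Γ : ℝ → Plane, IsEssLinePlane Γ →
    ⇑H '' Lset (Set.range Γ) = Lset (Set.range (⇑H ∘ Γ)))

/-!
`Γ < H(Γ)` says that `H` expands the open set `U = L(Γ)`, that is, `Cl(U) ⊆ H(U)`. Given
`Cl(U) ⊆ Hⁿ⁺¹(U)`, choose open sets `U ⊆ L₀ ⊆ L₁ ⊆ ⋯ ⊆ Lₙ`, each containing the closure of the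
previous one, with `Cl(Lₙ) ⊆ Hⁿ⁺¹(L₀)`: then `H` itself expands `⋃ Hᵏ(Lⱼ)`, the union over
`k + j = n`. The `Lⱼ` can be taken expanded by the maps that commute with `H` and expand `U`, so the
exponents are removed one at a time, and a connected component of the resulting set is a connected
open `U` expanded by every `Hᵢ`.

It remains to find an essential line between `Cl(U)` and `⋂ Hᵢ(U)`. After rescaling the plane, a
Urysohn function which is `0` on the former and `1` outside the latter varies by less than `1/2`
over unit distances. Among the edges of the triangular lattice along which it crosses the level
`1/2` there is, as in the game of Hex, an interface from south to north, and the polygonal line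
through the midpoints of these edges is the desired line.
-/

section ComplexLog

open Complex
open scoped Real

theorem sub_log_exp_const {X : Type*} [TopologicalSpace X] {S : Set X} {ℓ : X → ℂ} {x y : X}
    (hS : IsPreconnected S) (hℓ : ContinuousOn ℓ S) (hslit : ∀ z ∈ S, exp (ℓ z) ∈ slitPlane)
    (hx : x ∈ S) (hy : y ∈ S) : ℓ x - log (exp (ℓ x)) = ℓ y - log (exp (ℓ y)) := by
  have hdiscrete : IsDiscrete (AddSubgroup.zmultiples (2 * π * I : ℂ) : Set ℂ) :=
    ⟨NormedSpace.discreteTopology_zmultiples _⟩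
  refine hS.constant_of_mapsTo hdiscrete (f := fun z => ℓ z - log (exp (ℓ z)))
    (hℓ.sub (hℓ.cexp.clog hslit)) (fun z _ => ?_) hx hy
  obtain ⟨n, hn⟩ := exp_eq_exp_iff_exists_int.1 (exp_log (exp_ne_zero (ℓ z))).symm
  exact ⟨n, by simp only [zsmul_eq_mul]; linear_combination -hn⟩

-- A logarithm of a nonvanishing `F` would gain `2πi` around the rectangle.
theorem exists_eq_zero_of_rectangle {F : ℝ × ℝ → ℂ} {x₀ x₁ y₀ y₁ : ℝ} (hF : Continuous F)
    (hleft : ∀ y, -F (x₀, y) ∈ slitPlane) (hright : ∀ y, F (x₁, y) ∈ slitPlane)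
    (hbot : ∀ x, 0 < (F (x, y₀)).im) (htop : ∀ x, (F (x, y₁)).im < 0) : ∃ z, F z = 0 := by
  by_contra! hne
  obtain ⟨ℓ, ⟨-, hℓ⟩, -⟩ := isCoveringMapOn_exp.existsUnique_continuousMap_lifts (A := ℝ × ℝ)
    ⟨F, hF⟩ (a₀ := (0, 0)) (e₀ := log (F (0, 0))) (exp_log (hne _)) fun z => by simpa using hne z
  obtain rfl : (fun z => exp (ℓ z)) = F := hℓ
  have hvert (x) : Continuous fun y => ℓ (x, y) := by fun_prop
  have hhorz (y) : Continuous fun x => ℓ (x, y) := by fun_prop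
  have right := sub_log_exp_const isPreconnected_univ (hvert x₁).continuousOn
    (fun y _ => hright y) (mem_univ y₀) (mem_univ y₁)
  have bot := sub_log_exp_const isPreconnected_univ (hhorz y₀).continuousOn
    (fun x _ => .inr (hbot x).ne') (mem_univ x₀) (mem_univ x₁)
  have top := sub_log_exp_const isPreconnected_univ (hhorz y₁).continuousOn
    (fun x _ => .inr (htop x).ne) (mem_univ x₀) (mem_univ x₁)
  have left := sub_log_exp_const (ℓ := fun y => ℓ (x₀, y) + π * I) isPreconnected_univ
    ((hvert x₀).add_const _).continuousOn (fun y _ => by simpa [exp_add] using hleft y)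
    (mem_univ y₀) (mem_univ y₁)
  have jump : log (-exp (ℓ (x₀, y₁))) - log (exp (ℓ (x₀, y₁))) =
      log (-exp (ℓ (x₀, y₀))) - log (exp (ℓ (x₀, y₀))) := by
    simp only [exp_add, exp_pi_mul_I, mul_neg_one] at left
    linear_combination left - bot - right + top
  have := congr_arg im jump
  rw [sub_im, sub_im, log_im, log_im, log_im, log_im, arg_neg_eq_arg_add_pi_of_im_neg (htop x₀),
    arg_neg_eq_arg_sub_pi_of_im_pos (hbot x₀)] at this
  linarith [Real.pi_pos]

end ComplexLog

theorem isProperMap_of_tendsto {f : ℝ → ℝ} (hf : Continuous f) (htop : Tendsto f atTop atTop)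
    (hbot : Tendsto f atBot atBot) : IsProperMap f := by
  rw [isProperMap_iff_tendsto_cocompact, cocompact_eq_atBot_atTop]
  exact ⟨hf, hbot.sup_sup htop⟩

theorem Lset_eq_connectedComponentIn {A : Set Plane} {m : ℝ} (hA : ∀ x ≤ m, ((x, 0) : Plane) ∉ A) :
    Lset A = connectedComponentIn Aᶜ (m, 0) := by
  have hray : IsPreconnected ((fun x : ℝ => ((x, 0) : Plane)) '' Iic m) :=
    isPreconnected_Iic.image _ (by fun_prop)
  have heq (x) (hx : x ≤ m) :
      connectedComponentIn Aᶜ ((x, 0) : Plane) = connectedComponentIn Aᶜ (m, 0) :=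
    connectedComponentIn_eq <| hray.subset_connectedComponentIn (mem_image_of_mem _ hx)
      (by rintro _ ⟨u, hu, rfl⟩; exact hA u hu) (mem_image_of_mem _ self_mem_Iic)
  ext p
  constructor
  · rintro ⟨s, hs⟩
    exact heq _ (min_le_right s m) ▸ hs _ (min_le_left s m)
  · exact fun hp => ⟨m, fun x hx => (heq x hx).symm ▸ hp⟩

namespace IsEssLinePlane

variable {Γ : ℝ → Plane}

theorem of_tendsto (hc : Continuous Γ) (hinj : Function.Injective Γ)
    (htop : Tendsto (fun t => (Γ t).2) atTop atTop)
    (hbot : Tendsto (fun t => (Γ t).2) atBot atBot) : IsEssLinePlane Γ :=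
  ⟨hc, hinj, isProperMap_of_comp_of_t2 hc continuous_snd
    (isProperMap_of_tendsto (continuous_snd.comp hc) htop hbot), htop, hbot⟩

theorem continuous (h : IsEssLinePlane Γ) : Continuous Γ := h.1

theorem isClosed_range (h : IsEssLinePlane Γ) : IsClosed (range Γ) := h.2.2.1.isClosed_range

theorem isProperMap_snd (h : IsEssLinePlane Γ) : IsProperMap fun t => (Γ t).2 :=
  isProperMap_of_tendsto (continuous_snd.comp h.continuous) h.2.2.2.1 h.2.2.2.2

theorem exists_halfBands_subset_compl (h : IsEssLinePlane Γ) (M : ℝ) :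
    ∃ m, Iic (-m) ×ˢ Icc (-M) M ⊆ (range Γ)ᶜ ∧ Ici m ×ˢ Icc (-M) M ⊆ (range Γ)ᶜ := by
  obtain ⟨C, hC⟩ := (h.isProperMap_snd.isCompact_preimage
    (isCompact_Icc (a := -M) (b := M))).exists_bound_of_continuousOn
    (continuous_fst.comp h.continuous).continuousOn
  refine ⟨C + 1, ?_, ?_⟩ <;> rintro _ ⟨hx, hy⟩ ⟨t, rfl⟩ <;>
    have := abs_le.1 (hC t hy) <;> simp only [mem_Iic, mem_Ici, Function.comp_apply] at * <;>
    linarith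

theorem exists_Lset_eq (h : IsEssLinePlane Γ) :
    ∃ m : ℝ, Lset (range Γ) = connectedComponentIn (range Γ)ᶜ (m, 0) := by
  obtain ⟨m, hm, -⟩ := h.exists_halfBands_subset_compl 0
  exact ⟨-m, Lset_eq_connectedComponentIn fun x hx => hm ⟨hx, by simp⟩⟩

theorem isOpen_Lset (h : IsEssLinePlane Γ) : IsOpen (Lset (range Γ)) := by
  obtain ⟨m, hm⟩ := h.exists_Lset_eq
  exact hm ▸ h.isClosed_range.isOpen_compl.connectedComponentIn

theorem isPreconnected_Lset (h : IsEssLinePlane Γ) : IsPreconnected (Lset (range Γ)) := by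
  obtain ⟨m, hm⟩ := h.exists_Lset_eq
  exact hm ▸ isPreconnected_connectedComponentIn

theorem disjoint_Lset_range (h : IsEssLinePlane Γ) : Disjoint (Lset (range Γ)) (range Γ) := by
  obtain ⟨m, hm⟩ := h.exists_Lset_eq
  exact hm ▸ disjoint_left.2 fun _ hz => connectedComponentIn_subset _ _ hz

theorem subset_Lset (h : IsEssLinePlane Γ) {S : Set Plane} (hS : IsPreconnected S)
    (hSΓ : Disjoint S (range Γ)) (hne : (S ∩ Lset (range Γ)).Nonempty) : S ⊆ Lset (range Γ) := by
  obtain ⟨m, hm⟩ := h.exists_Lset_eq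
  obtain ⟨z, hzS, hz⟩ := hne
  rw [hm] at hz ⊢
  exact connectedComponentIn_eq hz ▸
    hS.subset_connectedComponentIn hzS (disjoint_left.1 hSΓ)

theorem closure_Lset_subset (h : IsEssLinePlane Γ) :
    closure (Lset (range Γ)) ⊆ Lset (range Γ) ∪ range Γ := by
  refine fun z hz => or_iff_not_imp_right.2 fun hzΓ => ?_
  have hmem := mem_connectedComponentIn (F := (range Γ)ᶜ) hzΓ
  exact h.subset_Lset isPreconnected_connectedComponentIn
    (disjoint_left.2 fun _ hw => connectedComponentIn_subset _ _ hw)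
    (mem_closure_iff.1 hz _ h.isClosed_range.isOpen_compl.connectedComponentIn hmem) hmem

theorem exists_mem_range_of_path (h : IsEssLinePlane Γ) {x₀ x₁ : ℝ}
    (hx₀ : ∀ t, (Γ t).2 = 0 → x₀ < (Γ t).1) (hx₁ : ∀ t, (Γ t).2 = 0 → (Γ t).1 < x₁)
    (α : Path ((x₀, 0) : Plane) (x₁, 0)) : ∃ s, α s ∈ range Γ := by
  obtain ⟨B, hB⟩ := isCompact_univ.exists_bound_of_continuousOn
    (f := fun s => (α s).2) (by fun_prop)
  obtain ⟨T₁, hT₁⟩ := (h.2.2.2.1.eventually_gt_atTop B).exists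
  obtain ⟨T₀, hT₀⟩ := (h.2.2.2.2.eventually_lt_atBot (-B)).exists
  have hBα (s : ℝ) : |(α.extend s).2| ≤ B := hB (projIcc 0 1 zero_le_one s) (mem_univ _)
  obtain ⟨⟨s, t⟩, hst⟩ := exists_eq_zero_of_rectangle (x₀ := 0) (x₁ := 1) (y₀ := T₀) (y₁ := T₁)
    (F := fun z => Complex.equivRealProdCLM.symm (α.extend z.1 - Γ z.2))
    (by have := h.continuous; fun_prop)
    (fun t => by
      rcases eq_or_ne (Γ t).2 0 with ht | ht
      · exact .inl (by simpa using hx₀ t ht)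
      · exact .inr (by simpa using ht))
    (fun t => by
      rcases eq_or_ne (Γ t).2 0 with ht | ht
      · exact .inl (by simpa using hx₁ t ht)
      · exact .inr (by simpa using ht))
    (fun s => by simpa using hT₀.trans_le (abs_le.1 (hBα s)).1)
    (fun s => by simpa using (abs_le.1 (hBα s)).2.trans_lt hT₁)
  refine ⟨projIcc 0 1 zero_le_one s, t, ?_⟩
  exact (sub_eq_zero.1 ((map_eq_zero_iff _ (Complex.equivRealProdCLM.symm.injective)).1 hst)).symm

theorem eventually_mem_Lset (h : IsEssLinePlane Γ) (y : ℝ) :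
    ∀ᶠ p : Plane in atBot ×ˢ 𝓝 y, p ∈ Lset (range Γ) := by
  obtain ⟨m, hm, -⟩ := h.exists_halfBands_subset_compl (|y| + 1)
  have hy : ∀ᶠ v in 𝓝 y, |v| ≤ |y| + 1 :=
    (continuous_abs.tendsto y).eventually (eventually_le_nhds (lt_add_one _))
  have hband := ((convex_Iic (-m)).prod (convex_Icc (-(|y| + 1)) (|y| + 1))).isPreconnected
  refine ((eventually_le_atBot (-m)).prod_mk hy).mono fun p hp => ⟨-m, fun x hx => ?_⟩
  have h0 : (0 : ℝ) ∈ Icc (-(|y| + 1)) (|y| + 1) := ⟨neg_nonpos.2 (by positivity), by positivity⟩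
  exact hband.subset_connectedComponentIn (mk_mem_prod hx h0) hm ⟨hp.1, abs_le.1 hp.2⟩

theorem eventually_notMem_Lset (h : IsEssLinePlane Γ) (y : ℝ) :
    ∀ᶠ p : Plane in atTop ×ˢ 𝓝 y, p ∉ Lset (range Γ) := by
  obtain ⟨m, hleft, hright⟩ := h.exists_halfBands_subset_compl (|y| + 1)
  have hy : ∀ᶠ v in 𝓝 y, |v| ≤ |y| + 1 :=
    (continuous_abs.tendsto y).eventually (eventually_le_nhds (lt_add_one _))
  have hband := ((convex_Ici m).prod (convex_Icc (-(|y| + 1)) (|y| + 1))).isPreconnected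
  have h0 : (0 : ℝ) ∈ Icc (-(|y| + 1)) (|y| + 1) := ⟨neg_nonpos.2 (by positivity), by positivity⟩
  refine ((eventually_ge_atTop m).prod_mk hy).mono fun p hp hpL => ?_
  have hmL : ((m, 0) : Plane) ∈ Lset (range Γ) := h.subset_Lset hband
    (subset_compl_iff_disjoint_right.1 hright) ⟨p, ⟨hp.1, abs_le.1 hp.2⟩, hpL⟩
    (mk_mem_prod self_mem_Ici h0)
  have hm : ((-m, 0) : Plane) ∈ (range Γ)ᶜ := hleft (mk_mem_prod self_mem_Iic h0)
  rw [Lset_eq_connectedComponentIn fun x hx => hleft ⟨hx, h0⟩] at hmL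
  have hpath := h.isClosed_range.isOpen_compl.connectedComponentIn.isConnected_iff_isPathConnected.1
    (isConnected_connectedComponentIn_iff.2 hm)
  obtain ⟨α, hα⟩ := hpath.joinedIn _ (mem_connectedComponentIn hm) _ hmL
  obtain ⟨s, hs⟩ := h.exists_mem_range_of_path
    (fun t ht => not_le.1 fun hle => hleft ⟨hle, ht ▸ h0⟩ (mem_range_self t))
    (fun t ht => not_le.1 fun hle => hright ⟨hle, ht ▸ h0⟩ (mem_range_self t)) α
  exact connectedComponentIn_subset _ _ (hα s) hs

theorem lineLT_of_range_subset {A B : ℝ → Plane} (hA : IsEssLinePlane A) (hB : IsEssLinePlane B)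
    (hAB : range A ⊆ Lset (range B)) : lineLT (range A) (range B) := by
  have hdisj : Disjoint (range B) (range A) :=
    (hB.disjoint_Lset_range.mono_left hAB).symm
  obtain ⟨z, hzA, hzB⟩ := ((hA.eventually_mem_Lset 0).and (hB.eventually_mem_Lset 0)).exists
  by_cases hmeet : (range B ∩ Lset (range A)).Nonempty
  · exfalso
    have hBA := hA.subset_Lset (isPreconnected_range hB.continuous) hdisj hmeet
    have hclopen : IsClopen (Lset (range A) ∪ Lset (range B)) := by
      refine ⟨closure_subset_iff_isClosed.1 ?_, hA.isOpen_Lset.union hB.isOpen_Lset⟩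
      rw [closure_union]
      exact union_subset
        (hA.closure_Lset_subset.trans (union_subset_union_right _ hAB))
        (hB.closure_Lset_subset.trans
          (union_comm (range B) _ ▸ union_subset_union_left _ hBA))
    obtain ⟨w, hwA, hwB⟩ :=
      ((hA.eventually_notMem_Lset 0).and (hB.eventually_notMem_Lset 0)).exists
    have huniv := hclopen.eq_univ ⟨z, .inl hzA⟩
    exact (huniv ▸ mem_univ w : w ∈ Lset (range A) ∪ Lset (range B)).elim hwA hwB
  · refine hB.subset_Lset hA.isPreconnected_Lset.closure ?_ ⟨z, subset_closure hzA, hzB⟩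
    refine Disjoint.mono_left hA.closure_Lset_subset (disjoint_union_left.2 ⟨?_, hdisj.symm⟩)
    exact (disjoint_iff_inter_eq_empty.2 (not_nonempty_iff_eq_empty.1 hmeet)).symm

end IsEssLinePlane

section Expands

variable {X : Type*} [TopologicalSpace X]

theorem homeomorph_coe_mul (f g : X ≃ₜ X) : ⇑(f * g) = f ∘ g := rfl

theorem homeomorph_coe_one : ⇑(1 : X ≃ₜ X) = id := rfl

theorem homeomorph_coe_pow (f : X ≃ₜ X) (n : ℕ) : ⇑(f ^ n) = f^[n] := by
  induction n with
  | zero => rfl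
  | succ n ih => rw [pow_succ, homeomorph_coe_mul, ih, Function.iterate_succ]

/-- `f` expands `U` when `f '' U` contains the closure of `U`; for an essential homeomorphism `f`
and `U = L(Γ)` this is the relation `Γ < f(Γ)`. -/
def Expands (f : X ≃ₜ X) (U : Set X) : Prop := closure U ⊆ f '' U

theorem Expands.connectedComponentIn {f : X ≃ₜ X} {U : Set X} {z : X} (hf : Expands f U)
    (hz : (_root_.connectedComponentIn U z ∩ f '' _root_.connectedComponentIn U z).Nonempty) :
    Expands f (_root_.connectedComponentIn U z) := by
  obtain ⟨w, hwC, v, hvC, rfl⟩ := hz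
  have hvU := connectedComponentIn_subset _ _ hvC
  rw [Expands, connectedComponentIn_eq hvC, f.image_connectedComponentIn hvU]
  exact isPreconnected_connectedComponentIn.closure.subset_connectedComponentIn
    (subset_closure (connectedComponentIn_eq hvC ▸ hwC))
    ((closure_mono (connectedComponentIn_subset _ _)).trans hf)

theorem exists_isOpen_chain [NormalSpace X] {C V : Set X} (hC : IsClosed C) (hV : IsOpen V)
    (hCV : C ⊆ V) : ∃ L : ℕ → Set X, (∀ j, IsOpen (L j)) ∧ (∀ j, C ⊆ L j) ∧
      (∀ j, closure (L j) ⊆ L (j + 1)) ∧ ∀ j, closure (L j) ⊆ V := by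
  obtain ⟨φ, hφC, hφV, -⟩ := exists_continuous_zero_one_of_isClosed hC hV.isClosed_compl
    (disjoint_compl_right_iff_subset.2 hCV)
  obtain ⟨a, ha_mono, ha, -⟩ := exists_seq_strictMono_tendsto' (zero_lt_one' ℝ)
  have hclosure (j) : closure {x | φ x < a j} ⊆ {x | φ x ≤ a j} :=
    closure_lt_subset_le φ.continuous continuous_const
  refine ⟨fun j => {x | φ x < a j}, fun j => isOpen_lt φ.continuous continuous_const,
    fun j x hx => (hφC hx).trans_lt (ha j).1,
    fun j x hx => (hclosure j hx).trans_lt (ha_mono j.lt_succ_self),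
    fun j x hx => not_not.1 fun hxV => ?_⟩
  exact ((hclosure j hx).trans_lt (ha j).2).ne (hφV hxV)

theorem compl_image_pow_mem {𝓕 : Filter X} {f : X ≃ₜ X} (hf : Tendsto f.symm 𝓕 𝓕) {S : Set X}
    (hS : Sᶜ ∈ 𝓕) (n : ℕ) : ((f ^ n) '' S)ᶜ ∈ 𝓕 := by
  induction n with
  | zero => simpa [homeomorph_coe_one] using hS
  | succ n ih =>
    rw [pow_succ', homeomorph_coe_mul, image_comp, Homeomorph.image_eq_preimage_symm f]
    exact hf ih

open Finset (HasAntidiagonal)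

/-- The union of the sets `fᵏ (L j)` over `k + j = n`. When the `L j` increase, `f` moves each of
these sets to the next larger one, except the last, `fⁿ (L 0)`. -/
def tower (f : X ≃ₜ X) (L : ℕ → Set X) (n : ℕ) : Set X :=
  ⋃ p ∈ HasAntidiagonal.antidiagonal n, (f ^ p.1) '' L p.2

section Tower

variable {f g : X ≃ₜ X} {L : ℕ → Set X} {n : ℕ}

theorem isOpen_tower (hL : ∀ j, IsOpen (L j)) : IsOpen (tower f L n) :=
  isOpen_biUnion fun p _ => (f ^ p.1).isOpenMap _ (hL _)

theorem image_subset_tower {k j : ℕ} (hkj : k + j = n) : (f ^ k) '' L j ⊆ tower f L n :=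
  subset_iUnion₂_of_subset (k, j) (HasAntidiagonal.mem_antidiagonal.2 hkj) Subset.rfl

theorem subset_tower : L n ⊆ tower f L n := by
  simpa [homeomorph_coe_one] using image_subset_tower (f := f) (L := L) (zero_add n)

theorem closure_tower : closure (tower f L n) = tower f (fun j => closure (L j)) n := by
  simp only [tower, Finset.closure_biUnion, Homeomorph.image_closure]

theorem compl_tower_mem {𝓕 : Filter X} (hf : Tendsto f.symm 𝓕 𝓕) (hL : ∀ j, (L j)ᶜ ∈ 𝓕) :
    (tower f L n)ᶜ ∈ 𝓕 := by
  simp only [tower, compl_iUnion]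
  exact (biInter_finset_mem _).2 fun p _ => compl_image_pow_mem hf (hL p.2) p.1

theorem expands_tower_of_commute (hgf : Commute g f) (hL : ∀ j, Expands g (L j)) :
    Expands g (tower f L n) := by
  rw [Expands, closure_tower]
  refine iUnion₂_subset fun p hp => ?_
  calc (f ^ p.1) '' closure (L p.2) ⊆ (f ^ p.1) '' (g '' L p.2) := image_mono (hL _)
    _ = g '' ((f ^ p.1) '' L p.2) := by
      simp only [← image_comp, ← homeomorph_coe_mul, (hgf.pow_right p.1).eq]
    _ ⊆ g '' tower f L n := image_mono (image_subset_tower (HasAntidiagonal.mem_antidiagonal.1 hp))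

theorem expands_tower (hLL : ∀ j, closure (L j) ⊆ L (j + 1))
    (hLn : closure (L n) ⊆ (f ^ (n + 1)) '' L 0) : Expands f (tower f L n) := by
  rw [Expands, closure_tower]
  refine iUnion₂_subset ?_
  rintro ⟨_ | k, j⟩ hkj <;> rw [HasAntidiagonal.mem_antidiagonal] at hkj
  · obtain rfl : j = n := by omega
    calc ⇑(f ^ 0) '' closure (L j) = closure (L j) := by simp [homeomorph_coe_one]
      _ ⊆ f '' ((f ^ j) '' L 0) := by
        rwa [← image_comp, ← homeomorph_coe_mul, ← pow_succ']
      _ ⊆ f '' tower f L j := image_mono (image_subset_tower (add_zero j))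
  · calc (f ^ (k + 1)) '' closure (L j) ⊆ (f ^ (k + 1)) '' L (j + 1) := image_mono (hLL j)
      _ = f '' ((f ^ k) '' L (j + 1)) := by rw [pow_succ', homeomorph_coe_mul, image_comp]
      _ ⊆ f '' tower f L n := image_mono (image_subset_tower (by omega))

end Tower

variable [NormalSpace X] {ι : Type*} [Finite ι] {𝓕 : Filter X} {U : Set X}

theorem exists_expands_of_expands_pow_succ {f : X ≃ₜ X} {g : ι → X ≃ₜ X} {n : ℕ}
    (hf : Tendsto f.symm 𝓕 𝓕) (hcomm : ∀ i, Commute (g i) f) (hU : IsOpen U) (hU𝓕 : Uᶜ ∈ 𝓕)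
    (hg : ∀ i, Expands (g i) U) (hfn : Expands (f ^ (n + 1)) U) :
    ∃ U', IsOpen U' ∧ U ⊆ U' ∧ U'ᶜ ∈ 𝓕 ∧ (∀ i, Expands (g i) U') ∧ Expands f U' := by
  obtain ⟨L, hLo, hUL, hLL, hLV⟩ := exists_isOpen_chain isClosed_closure
    (((f ^ (n + 1)).isOpenMap U hU).inter (isOpen_iInter_of_finite fun i => (g i).isOpenMap U hU))
    (subset_inter hfn (subset_iInter hg))
  replace hUL (j) : U ⊆ L j := subset_closure.trans (hUL j)
  have hLf (j) : closure (L j) ⊆ (f ^ (n + 1)) '' U := (hLV j).trans inter_subset_left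
  have hLg (j) (i) : closure (L j) ⊆ g i '' U :=
    (hLV j).trans (inter_subset_right.trans (iInter_subset _ i))
  refine ⟨tower f L n, isOpen_tower hLo, (hUL n).trans subset_tower, compl_tower_mem hf fun j => ?_,
    fun i => expands_tower_of_commute (hcomm i) fun j => (hLg j i).trans (image_mono (hUL j)),
    expands_tower hLL ((hLf n).trans (image_mono (hUL 0)))⟩
  exact mem_of_superset (compl_image_pow_mem hf hU𝓕 (n + 1))
    (compl_subset_compl.2 (subset_closure.trans (hLf j)))

theorem exists_forall_expands_of_expands_pow {f : ι → X ≃ₜ X} {q : ι → ℕ} (hq : ∀ i, 0 < q i)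
    (hf : ∀ i, Tendsto (f i).symm 𝓕 𝓕) (hcomm : ∀ i j, Commute (f i) (f j)) (hU : IsOpen U)
    (hU𝓕 : Uᶜ ∈ 𝓕) (hfq : ∀ i, Expands (f i ^ q i) U) :
    ∃ U', IsOpen U' ∧ U ⊆ U' ∧ U'ᶜ ∈ 𝓕 ∧ ∀ i, Expands (f i) U' := by
  classical
  have := Fintype.ofFinite ι
  suffices ∀ s : Finset ι, ∃ U', IsOpen U' ∧ U ⊆ U' ∧ U'ᶜ ∈ 𝓕 ∧
      ∀ i, Expands (f i ^ if i ∈ s then 1 else q i) U' by simpa using this Finset.univ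
  intro s
  induction s using Finset.induction_on with
  | empty => exact ⟨U, hU, Subset.rfl, hU𝓕, by simpa using hfq⟩
  | insert a s ha ih =>
    obtain ⟨U₁, hU₁, hUU₁, hU₁𝓕, hexp⟩ := ih
    obtain ⟨n, hn⟩ := Nat.exists_eq_succ_of_ne_zero (hq a).ne'
    have hexp_a : Expands (f a ^ (n + 1)) U₁ := by simpa [ha, hn] using hexp a
    obtain ⟨U₂, hU₂, hU₁₂, hU₂𝓕, hothers, hexp_a'⟩ := exists_expands_of_expands_pow_succ (hf a)
      (fun i => (hcomm i a).pow_left _) hU₁ hU₁𝓕 hexp hexp_a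
    refine ⟨U₂, hU₂, hUU₁.trans hU₁₂, hU₂𝓕, fun i => ?_⟩
    rcases eq_or_ne i a with rfl | hia
    · simpa using hexp_a'
    · simpa [hia] using hothers i

end Expands

section UnitStep

variable {r : ℤ → ℤ}

theorem tendsto_atTop_of_frequently_pos (hr : Tendsto r atTop cofinite)
    (hstep : ∀ k, |r (k + 1) - r k| ≤ 1) (hpos : ∃ᶠ k in atTop, 0 < r k) :
    Tendsto r atTop atTop := by
  obtain ⟨K, hK⟩ := eventually_atTop.1
    (hr.eventually (finite_singleton 0).eventually_cofinite_notMem)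
  obtain ⟨K', hKK', hK'⟩ := frequently_atTop.1 hpos K
  have hpos (k) (hk : K' ≤ k) : 0 < r k := by
    induction k, hk using Int.leInduction with
    | base => exact hK'
    | succ k hk ih =>
      have hne : r (k + 1) ≠ 0 := hK (k + 1) (by omega)
      have := abs_le.1 (hstep k)
      omega
  refine tendsto_atTop.2 fun b => ?_
  filter_upwards [hr.eventually (finite_Ico 0 b).eventually_cofinite_notMem,
    eventually_ge_atTop K'] with k hkb hk
  exact not_lt.1 fun hlt => hkb ⟨(hpos k hk).le, hlt⟩

theorem tendsto_atTop_or_atBot_of_unit_step (hr : Tendsto r atTop cofinite)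
    (hstep : ∀ k, |r (k + 1) - r k| ≤ 1) :
    Tendsto r atTop atTop ∨ Tendsto r atTop atBot := by
  refine or_iff_not_imp_left.2 fun htop => tendsto_atBot.2 fun b => ?_
  have hnonpos := not_frequently.1 (mt (tendsto_atTop_of_frequently_pos hr hstep) htop)
  filter_upwards [hnonpos, hr.eventually (finite_Ioc b 0).eventually_cofinite_notMem] with k hk hkb
  exact not_lt.1 fun hlt => hkb ⟨hlt, not_lt.1 hk⟩

theorem exists_last_zero_of_unit_step (htop : Tendsto r atTop atTop) (hbot : Tendsto r atBot atBot)
    (hstep : ∀ k, |r (k + 1) - r k| ≤ 1) : ∃ k, r k = 0 ∧ ∀ m > k, 0 < r m := by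
  obtain ⟨K, hK⟩ := eventually_atTop.1 (htop.eventually_gt_atTop 0)
  obtain ⟨k, hk, hlast⟩ := Int.exists_greatest_of_bdd (P := fun k => r k ≤ 0)
    ⟨K, fun k hk => le_of_not_ge fun hKk => (hK k hKk).not_ge hk⟩
    (hbot.eventually_le_atBot 0).exists
  have hpos (m) (hm : k < m) : 0 < r m := not_le.1 fun hle => (hlast m hle).not_gt hm
  have := abs_le.1 (hstep k)
  have := hpos (k + 1) (lt_add_one k)
  exact ⟨k, by omega, hpos⟩

end UnitStep

section Interface

/-- Rotation by a sixth of a turn of the triangular lattice, with `(1, 0)` and `(0, 1)` as basis and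
`(1, 0)`, `(0, 1)`, `(-1, 1)`, `(-1, 0)`, `(0, -1)`, `(1, -1)` as unit vectors in cyclic order. -/
def sixthTurn : ℤ × ℤ ≃+ ℤ × ℤ where
  toFun d := (-d.2, d.1 + d.2)
  invFun d := (d.1 + d.2, -d.1)
  left_inv d := by ext <;> simp
  right_inv d := by ext <;> simp
  map_add' d d' := by ext <;> simp <;> ring

/-- `d` is one of the six unit vectors of the triangular lattice. -/
def IsLatticeStep (d : ℤ × ℤ) : Prop :=
  d ≠ 0 ∧ d.1 ∈ Icc (-1) 1 ∧ d.2 ∈ Icc (-1) 1 ∧ d.1 + d.2 ∈ Icc (-1) 1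

variable {c : Set (ℤ × ℤ)} {d : ℤ × ℤ} {e : (ℤ × ℤ) × ℤ × ℤ}

theorem sixthTurn_apply (d : ℤ × ℤ) : sixthTurn d = (-d.2, d.1 + d.2) := rfl

theorem sixthTurn_symm_apply (d : ℤ × ℤ) : sixthTurn.symm d = (d.1 + d.2, -d.1) := rfl

theorem sixthTurn_add_sixthTurn_symm (d : ℤ × ℤ) : sixthTurn d + sixthTurn.symm d = d := by
  ext <;> simp [sixthTurn_apply, sixthTurn_symm_apply]

theorem sixthTurn_sixthTurn (d : ℤ × ℤ) : sixthTurn (sixthTurn d) = -sixthTurn.symm d := by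
  ext <;> simp [sixthTurn_apply, sixthTurn_symm_apply]

theorem sixthTurn_symm_sixthTurn_symm (d : ℤ × ℤ) :
    sixthTurn.symm (sixthTurn.symm d) = -sixthTurn d := by
  ext <;> simp [sixthTurn_apply, sixthTurn_symm_apply]

theorem IsLatticeStep.rotate (hd : IsLatticeStep d) : IsLatticeStep (sixthTurn d) := by
  obtain ⟨hne, h₁, h₂, h₁₂⟩ := hd
  simp only [IsLatticeStep, sixthTurn_apply, ne_eq, Prod.ext_iff, Prod.fst_zero, Prod.snd_zero,
    mem_Icc] at *
  omega

theorem IsLatticeStep.rotate_symm (hd : IsLatticeStep d) : IsLatticeStep (sixthTurn.symm d) := by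
  obtain ⟨hne, h₁, h₂, h₁₂⟩ := hd
  simp only [IsLatticeStep, sixthTurn_symm_apply, ne_eq, Prod.ext_iff, Prod.fst_zero, Prod.snd_zero,
    mem_Icc] at *
  omega

/-- The edges of the triangular lattice leading out of `c`, each given by its origin and its
direction. -/
def boundaryEdges (c : Set (ℤ × ℤ)) : Set ((ℤ × ℤ) × ℤ × ℤ) :=
  {e | e.1 ∈ c ∧ e.1 + e.2 ∉ c ∧ IsLatticeStep e.2}

open Classical in
/-- The other edge leading out of `c` of the triangle to the left of the edge `e`. -/
def nextEdge (c : Set (ℤ × ℤ)) (e : (ℤ × ℤ) × ℤ × ℤ) : (ℤ × ℤ) × ℤ × ℤ :=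
  if e.1 + sixthTurn e.2 ∈ c then (e.1 + sixthTurn e.2, sixthTurn.symm e.2)
  else (e.1, sixthTurn e.2)

open Classical in
/-- The other edge leading out of `c` of the triangle to the right of the edge `e`. -/
def prevEdge (c : Set (ℤ × ℤ)) (e : (ℤ × ℤ) × ℤ × ℤ) : (ℤ × ℤ) × ℤ × ℤ :=
  if e.1 + sixthTurn.symm e.2 ∈ c then (e.1 + sixthTurn.symm e.2, sixthTurn e.2)
  else (e.1, sixthTurn.symm e.2)

theorem nextEdge_mem (he : e ∈ boundaryEdges c) : nextEdge c e ∈ boundaryEdges c := by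
  obtain ⟨hc, hc', hd⟩ := he
  unfold nextEdge
  split_ifs with h
  · exact ⟨h, by rwa [add_assoc, sixthTurn_add_sixthTurn_symm], hd.rotate_symm⟩
  · exact ⟨hc, h, hd.rotate⟩

theorem prevEdge_mem (he : e ∈ boundaryEdges c) : prevEdge c e ∈ boundaryEdges c := by
  obtain ⟨hc, hc', hd⟩ := he
  unfold prevEdge
  split_ifs with h
  · refine ⟨h, ?_, hd.rotate⟩
    rwa [add_assoc, add_comm (sixthTurn.symm _), sixthTurn_add_sixthTurn_symm]
  · exact ⟨hc, h, hd.rotate_symm⟩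

theorem prevEdge_nextEdge (he : e ∈ boundaryEdges c) : prevEdge c (nextEdge c e) = e := by
  unfold nextEdge
  split_ifs
  · simp [prevEdge, sixthTurn_symm_sixthTurn_symm, he.1]
  · simp [prevEdge, he.2.1]

theorem nextEdge_prevEdge (he : e ∈ boundaryEdges c) : nextEdge c (prevEdge c e) = e := by
  unfold prevEdge
  split_ifs
  · simp [nextEdge, sixthTurn_sixthTurn, he.1]
  · simp [nextEdge, he.2.1]

theorem abs_nextEdge_row_sub_le (he : e ∈ boundaryEdges c) : |(nextEdge c e).1.2 - e.1.2| ≤ 1 := by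
  obtain ⟨-, -, -, -, -, hd⟩ := he
  unfold nextEdge
  split_ifs
  · simpa [sixthTurn_apply] using abs_le.2 hd
  · simp

/-- The permutation of the edges leading out of `c` whose orbits are the interfaces between `c` and
its complement, described with `c` on the left. -/
def nextEdgePerm (c : Set (ℤ × ℤ)) : Equiv.Perm (boundaryEdges c) where
  toFun e := ⟨nextEdge c e, nextEdge_mem e.2⟩
  invFun e := ⟨prevEdge c e, prevEdge_mem e.2⟩
  left_inv e := Subtype.ext (prevEdge_nextEdge e.2)
  right_inv e := Subtype.ext (nextEdge_prevEdge e.2)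

/-- `s` runs along an interface between `c` and its complement, with `c` on the left. -/
structure IsInterface (c : Set (ℤ × ℤ)) (s : ℤ → (ℤ × ℤ) × ℤ × ℤ) : Prop where
  mem (k : ℤ) : s k ∈ boundaryEdges c
  add_one (k : ℤ) : s (k + 1) = nextEdge c (s k)

theorem exists_isInterface (he : e ∈ boundaryEdges c) : ∃ s, IsInterface c s ∧ s 0 = e := by
  refine ⟨fun k => ((nextEdgePerm c ^ k) ⟨e, he⟩ : boundaryEdges c),
    ⟨fun k => Subtype.coe_prop _, fun k => ?_⟩, rfl⟩
  rw [add_comm, zpow_one_add]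
  rfl

namespace IsInterface

variable {s t : ℤ → (ℤ × ℤ) × ℤ × ℤ}

theorem sub_one (hs : IsInterface c s) (k : ℤ) : s (k - 1) = prevEdge c (s k) := by
  conv_rhs => rw [← sub_add_cancel k 1, hs.add_one, prevEdge_nextEdge (hs.mem _)]

theorem shift (hs : IsInterface c s) (m : ℤ) : IsInterface c fun k => s (k + m) :=
  ⟨fun k => hs.mem _, fun k => by rw [add_right_comm, hs.add_one]⟩

theorem abs_row_sub_le (hs : IsInterface c s) (k : ℤ) : |(s (k + 1)).1.2 - (s k).1.2| ≤ 1 :=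
  hs.add_one k ▸ abs_nextEdge_row_sub_le (hs.mem k)

theorem eq_of_eq (hs : IsInterface c s) (ht : IsInterface c t) (h : s 0 = t 0) (k : ℤ) :
    s k = t k := by
  induction k using Int.induction_on with
  | zero => exact h
  | succ k ih => rw [hs.add_one, ht.add_one, ih]
  | pred k ih => rw [hs.sub_one, ht.sub_one, ih]

theorem injective (hs : IsInterface c s) (hinf : (range s).Infinite) : Function.Injective s := by
  by_contra hninj
  obtain ⟨i, j, hij, hne⟩ : ∃ i j, s i = s j ∧ i < j := by
    obtain ⟨i, j, hij, hne⟩ := Function.not_injective_iff.1 hninj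
    exact hne.lt_or_gt.elim (fun h => ⟨i, j, hij, h⟩) fun h => ⟨j, i, hij.symm, h⟩
  have hper : Function.Periodic s (j - i) := fun k => by
    have := (hs.shift j).eq_of_eq (hs.shift i) (by simpa using hij.symm) (k - i)
    simpa [sub_add_eq_add_sub, add_sub_assoc] using this
  exact hinf (hper.image_Ioc (sub_pos.2 hne) 0 ▸ (finite_Ioc _ _).image s)

end IsInterface

/-- On every row, `c` contains all points far to the left and no point far to the right. -/
def IsLeftSet (c : Set (ℤ × ℤ)) : Prop :=
  ∀ j : ℤ, (∀ᶠ i in atBot, (i, j) ∈ c) ∧ ∀ᶠ i in atTop, (i, j) ∉ c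

theorem IsLeftSet.finite_boundaryEdges_row (hc : IsLeftSet c) (j : ℤ) :
    {e ∈ boundaryEdges c | e.1.2 = j}.Finite := by
  obtain ⟨b, hb⟩ := eventually_atTop.1 (hc j).2
  obtain ⟨a, ha⟩ := eventually_atBot.1 <|
    ((hc (j - 1)).1.and ((hc j).1.and (hc (j + 1)).1))
  refine (((finite_Icc (a - 1) b).prod (finite_singleton j)).prod
    ((finite_Icc (-1) 1).prod (finite_Icc (-1) 1))).subset ?_
  rintro ⟨⟨i, j⟩, d₁, d₂⟩ ⟨⟨hz, hzd, -, h₁, h₂, -⟩, rfl⟩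
  refine ⟨⟨⟨?_, ?_⟩, rfl⟩, h₁, h₂⟩
  · by_contra! hi
    simp only [mem_Icc] at h₁ h₂
    obtain ⟨h, h', h''⟩ := ha (i + d₁) (by dsimp only at hi ⊢; omega)
    dsimp only at *
    obtain rfl | rfl | rfl : d₂ = -1 ∨ d₂ = 0 ∨ d₂ = 1 := by omega
    · exact hzd h
    · exact hzd (by simpa using h')
    · exact hzd h''
  · exact not_lt.1 fun hi => hb i hi.le hz

namespace IsInterface

variable {s : ℤ → (ℤ × ℤ) × ℤ × ℤ}

theorem infinite_range_of_tendsto_row {l : Filter ℤ} [l.NeBot]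
    (h : Tendsto (fun k => (s k).1.2) l cofinite) : (range s).Infinite := fun hfin => by
  obtain ⟨k, hk⟩ :=
    (h.eventually (hfin.image fun e => e.1.2).eventually_cofinite_notMem).exists
  exact hk (mem_image_of_mem _ (mem_range_self k))

theorem tendsto_row_cofinite (hs : IsInterface c s) (hc : IsLeftSet c)
    (hinj : Function.Injective s) : Tendsto (fun k => (s k).1.2) cofinite cofinite :=
  Tendsto.cofinite_of_finite_preimage_singleton fun j =>
    ((hc.finite_boundaryEdges_row j).preimage hinj.injOn).subset fun k hk => ⟨hs.mem k, hk⟩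

theorem tendsto_row_atTop_or (hs : IsInterface c s) (hc : IsLeftSet c)
    (hinj : Function.Injective s) :
    Tendsto (fun k => (s k).1.2) atTop atTop ∨ Tendsto (fun k => (s k).1.2) atTop atBot :=
  tendsto_atTop_or_atBot_of_unit_step
    ((hs.tendsto_row_cofinite hc hinj).mono_left (Int.cofinite_eq ▸ le_sup_right)) hs.abs_row_sub_le

theorem tendsto_row_atBot_or (hs : IsInterface c s) (hc : IsLeftSet c)
    (hinj : Function.Injective s) :
    Tendsto (fun k => (s k).1.2) atBot atTop ∨ Tendsto (fun k => (s k).1.2) atBot atBot := by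
  have hneg : Tendsto (fun k => (s (-k)).1.2) atTop cofinite :=
    ((hs.tendsto_row_cofinite hc hinj).mono_left (Int.cofinite_eq ▸ le_sup_left)).comp
      tendsto_neg_atTop_atBot
  have hstep (k : ℤ) : |(s (-(k + 1))).1.2 - (s (-k)).1.2| ≤ 1 := by
    rw [abs_sub_comm]
    simpa using hs.abs_row_sub_le (-(k + 1))
  refine (tendsto_atTop_or_atBot_of_unit_step hneg hstep).imp (fun h => ?_) fun h => ?_ <;>
    simpa only [Function.comp_def, neg_neg] using h.comp tendsto_neg_atBot_atTop

end IsInterface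

/-- The set `c` with all its rows below row `n` replaced by the half-line `i ≤ 0`. -/
def standardBelow (n : ℤ) (c : Set (ℤ × ℤ)) : Set (ℤ × ℤ) :=
  {z | z.2 < n ∧ z.1 ≤ 0 ∨ n ≤ z.2 ∧ z ∈ c}

section StandardBelow

variable {n : ℤ} {z : ℤ × ℤ}

theorem mem_standardBelow_of_lt (hz : z.2 < n) : z ∈ standardBelow n c ↔ z.1 ≤ 0 := by
  simp [standardBelow, hz, hz.not_ge]

theorem mem_standardBelow_of_le (hz : n ≤ z.2) : z ∈ standardBelow n c ↔ z ∈ c := by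
  simp [standardBelow, hz, hz.not_gt]

theorem IsLeftSet.standardBelow (hc : IsLeftSet c) (n : ℤ) : IsLeftSet (standardBelow n c) := by
  intro j
  rcases lt_or_ge j n with hj | hj
  · simp only [mem_standardBelow_of_lt (z := (_, j)) hj, not_le]
    exact ⟨eventually_le_atBot 0, eventually_gt_atTop 0⟩
  · simpa only [mem_standardBelow_of_le (z := (_, j)) hj] using hc j

theorem mem_boundaryEdges_standardBelow_of_lt (he : n < e.1.2) :
    e ∈ boundaryEdges (standardBelow n c) ↔ e ∈ boundaryEdges c := by
  simp only [boundaryEdges, mem_ofPred_eq, mem_standardBelow_of_le he.le]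
  refine and_congr_right fun _ => and_congr_left fun hd => not_congr (mem_standardBelow_of_le ?_)
  have := hd.2.2.1.1
  rw [Prod.snd_add]
  omega

theorem nextEdge_standardBelow (he : n < e.1.2) (hd : IsLatticeStep e.2) :
    nextEdge (standardBelow n c) e = nextEdge c e := by
  have hle : n ≤ (e.1 + sixthTurn e.2).2 := by
    have := hd.rotate.2.2.1.1
    rw [Prod.snd_add]
    omega
  unfold nextEdge
  congr 1
  exact propext (mem_standardBelow_of_le hle)

theorem prevEdge_standardBelow (he : n < e.1.2) (hd : IsLatticeStep e.2) :
    prevEdge (standardBelow n c) e = prevEdge c e := by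
  have hle : n ≤ (e.1 + sixthTurn.symm e.2).2 := by
    have := hd.rotate_symm.2.2.1.1
    rw [Prod.snd_add]
    omega
  unfold prevEdge
  congr 1
  exact propext (mem_standardBelow_of_le hle)

/-- The edges of the interface of `standardBelow n c` below row `n - 1`, indexed by the integers
`k ≤ 0` in the order in which they are followed. -/
def lowEdge (n k : ℤ) : (ℤ × ℤ) × ℤ × ℤ := ((0, n - 2 + k / 2), (1, k % 2 - 1))

theorem lowEdge_mem {k : ℤ} (hk : k ≤ 0) : lowEdge n k ∈ boundaryEdges (standardBelow n c) := by
  refine ⟨?_, ?_, ?_⟩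
  · rw [mem_standardBelow_of_lt] <;> simp only [lowEdge] <;> omega
  · rw [mem_standardBelow_of_lt] <;> simp only [lowEdge, Prod.mk_add_mk] <;> omega
  · simp only [lowEdge, IsLatticeStep, ne_eq, Prod.ext_iff, Prod.fst_zero, Prod.snd_zero, mem_Icc]
    omega

theorem prevEdge_lowEdge {k : ℤ} (hk : k ≤ 0) :
    prevEdge (standardBelow n c) (lowEdge n k) = lowEdge n (k - 1) := by
  have hmem : (lowEdge n k).1 + sixthTurn.symm (lowEdge n k).2 ∈ standardBelow n c ↔ k % 2 = 0 := by
    rw [mem_standardBelow_of_lt] <;>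
      simp only [lowEdge, sixthTurn_symm_apply, Prod.mk_add_mk] <;> omega
  simp only [prevEdge, hmem]
  split_ifs <;> simp only [lowEdge, sixthTurn_symm_apply, sixthTurn_apply, Prod.mk_add_mk,
    Prod.ext_iff, true_and]
    <;> omega

theorem exists_eq_lowEdge (he : e ∈ boundaryEdges (standardBelow n c)) (hen : e.1.2 < n - 2) :
    ∃ k ≤ 0, e = lowEdge n k := by
  obtain ⟨⟨i, j⟩, d₁, d₂⟩ := e
  obtain ⟨hz, hzd, -, h₁, h₂, h₁₂⟩ := he
  dsimp only at *
  rw [mem_Icc] at h₁ h₂ h₁₂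
  rw [mem_standardBelow_of_lt (by dsimp only; omega)] at hz
  rw [mem_standardBelow_of_lt (by dsimp only [Prod.mk_add_mk]; omega)] at hzd
  dsimp only [Prod.mk_add_mk] at hz hzd
  refine ⟨2 * (j - (n - 2)) + (d₂ + 1), by omega, ?_⟩
  simp only [lowEdge, Prod.ext_iff]
  omega

theorem exists_isInterface_standardBelow (hc : IsLeftSet c) (n : ℤ) :
    ∃ s, IsInterface (standardBelow n c) s ∧ Tendsto (fun k => (s k).1.2) atTop atTop ∧
      Tendsto (fun k => (s k).1.2) atBot atBot := by
  obtain ⟨s, hs, hs0⟩ := exists_isInterface (lowEdge_mem (n := n) (c := c) le_rfl)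
  have hlow (k) (hk : k ≤ 0) : s k = lowEdge n k := by
    induction k, hk using Int.leInductionDown with
    | base => exact hs0
    | pred k hk ih => rw [hs.sub_one, ih, prevEdge_lowEdge hk]
  have hbot : Tendsto (fun k => (s k).1.2) atBot atBot := by
    refine tendsto_atBot.2 fun b => ?_
    filter_upwards [eventually_le_atBot 0, eventually_le_atBot (2 * (b - (n - 2)))] with k hk hkb
    simp only [hlow k hk, lowEdge]
    omega
  have hinj := hs.injective <| IsInterface.infinite_range_of_tendsto_row <|
    hbot.mono_right (Int.cofinite_eq ▸ le_sup_left)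
  have htop_or := hs.tendsto_row_atTop_or (hc.standardBelow n) hinj
  refine ⟨s, hs, htop_or.resolve_right fun h => ?_, hbot⟩
  obtain ⟨k, hkn, hk⟩ := ((h.eventually_lt_atBot (n - 2)).and (eventually_gt_atTop 0)).exists
  obtain ⟨m, hm, hkm⟩ := exists_eq_lowEdge (hs.mem k) hkn
  exact hk.not_ge (hinj (hkm.trans (hlow m hm).symm) ▸ hm)

theorem exists_isInterface_standardBelow_last_zero (hc : IsLeftSet c) (n : ℤ) :
    ∃ s, IsInterface (standardBelow n c) s ∧ (s 0).1.2 = 0 ∧ (∀ k ≥ 0, 0 ≤ (s k).1.2) ∧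
      Tendsto (fun k => (s k).1.2) atTop atTop ∧ Tendsto (fun k => (s k).1.2) atBot atBot := by
  obtain ⟨s, hs, htop, hbot⟩ := exists_isInterface_standardBelow hc n
  obtain ⟨m, hm, hpos⟩ := exists_last_zero_of_unit_step htop hbot hs.abs_row_sub_le
  refine ⟨fun k => s (k + m), hs.shift m, by simpa using hm, fun k hk => ?_,
    htop.comp (tendsto_atTop_add_const_right _ m tendsto_id),
    hbot.comp (tendsto_atBot_add_const_right _ m tendsto_id)⟩
  rcases hk.eq_or_lt with rfl | hk
  · simp [hm]
  · exact (hpos _ (lt_add_of_pos_left m hk)).le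

end StandardBelow

namespace IsInterface

variable {s t : ℤ → (ℤ × ℤ) × ℤ × ℤ} {n : ℤ}

theorem eq_of_standardBelow_of_nonneg (ht : IsInterface (standardBelow n c) t)
    (hs : IsInterface c s) (h : t 0 = s 0) (hrow : ∀ k ≥ 0, n < (t k).1.2) {k : ℤ} (hk : 0 ≤ k) :
    t k = s k := by
  induction k, hk using Int.leInduction with
  | base => exact h
  | succ k hk ih =>
    rw [ht.add_one, hs.add_one, nextEdge_standardBelow (hrow k hk) (ht.mem k).2.2, ih]

theorem eq_of_standardBelow_of_nonpos (ht : IsInterface (standardBelow n c) t)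
    (hs : IsInterface c s) (h : t 0 = s 0) (hrow : ∀ k ≤ 0, n < (s k).1.2) {k : ℤ} (hk : k ≤ 0) :
    t k = s k := by
  induction k, hk using Int.leInductionDown with
  | base => exact h
  | pred k hk ih =>
    rw [ht.sub_one, hs.sub_one, ih, prevEdge_standardBelow (hrow k hk) (hs.mem k).2.2]

end IsInterface

-- The set is replaced by a standard one far down, where the interface is explicit; these interfaces
-- all cross row `0`, and infinitely many of them do so for the last time at the same edge.
theorem IsLeftSet.exists_isInterface (hc : IsLeftSet c) :
    ∃ s, IsInterface c s ∧ Function.Injective s ∧ Tendsto (fun k => (s k).1.2) atTop atTop ∧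
      Tendsto (fun k => (s k).1.2) atBot atBot := by
  choose t ht ht0 htpos httop htbot using
    fun n : ℕ => exists_isInterface_standardBelow_last_zero hc (-1 - n)
  have hmem (n : ℕ) : t n 0 ∈ {e ∈ boundaryEdges c | e.1.2 = 0} :=
    ⟨(mem_boundaryEdges_standardBelow_of_lt (by rw [ht0]; omega)).1 ((ht n).mem 0), ht0 n⟩
  have := (hc.finite_boundaryEdges_row 0).to_subtype
  obtain ⟨⟨e, he, _⟩, hfib⟩ := Finite.exists_infinite_fiber fun n => (⟨t n 0, hmem n⟩ : Subtype _)
  have hinf : {n | t n 0 = e}.Infinite := by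
    simpa only [preimage, mem_singleton_iff, Subtype.mk.injEq] using infinite_coe_iff.1 hfib
  obtain ⟨s, hs, hs0⟩ := _root_.exists_isInterface he
  have htop : Tendsto (fun k => (s k).1.2) atTop atTop := by
    obtain ⟨n, hn⟩ := hinf.nonempty
    refine (httop n).congr' ((eventually_ge_atTop 0).mono fun k hk => ?_)
    rw [(ht n).eq_of_standardBelow_of_nonneg hs (hn.trans hs0.symm)
      (fun k hk => by have := htpos n k hk; omega) hk]
  have hinj := hs.injective <| IsInterface.infinite_range_of_tendsto_row <|
    htop.mono_right (Int.cofinite_eq ▸ le_sup_right)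
  refine ⟨s, hs, hinj, htop, (hs.tendsto_row_atBot_or hc hinj).resolve_left fun hbot => ?_⟩
  obtain ⟨b, hb⟩ := (Int.cofinite_eq ▸ hbot.sup htop :
    Tendsto (fun k => (s k).1.2) cofinite atTop).isBoundedUnder_ge_atTop.bddBelow_range_of_cofinite
  obtain ⟨n, hn, hbn⟩ := hinf.exists_gt b.natAbs
  have heq (k : ℤ) (hk : k ≤ 0) : s k = t n k :=
    ((ht n).eq_of_standardBelow_of_nonpos hs (hn.trans hs0.symm)
      (fun k _ => by have := hb (mem_range_self k); omega) hk).symm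
  exact (htbot n).not_tendsto disjoint_atBot_atTop
    (hbot.congr' ((eventually_le_atBot 0).mono fun k hk => congrArg (·.1.2) (heq k hk)))

end Interface

section PolygonalLine

/-- The polygonal line through the points `a k`, which is at `a k` at time `k`. -/
def polygonalLine {E : Type*} [AddCommGroup E] [Module ℝ E] (a : ℤ → E) (t : ℝ) : E :=
  AffineMap.lineMap (a ⌊t⌋) (a (⌊t⌋ + 1)) (Int.fract t)

theorem polygonalLine_eq_of_mem_Icc {E : Type*} [AddCommGroup E] [Module ℝ E] (a : ℤ → E) {k : ℤ}
    {t : ℝ} (ht : t ∈ Icc (k : ℝ) (k + 1)) :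
    polygonalLine a t = AffineMap.lineMap (a k) (a (k + 1)) (t - k) := by
  rcases ht.2.eq_or_lt with rfl | hlt
  · simp [polygonalLine]
  · rw [polygonalLine, Int.fract, Int.floor_eq_iff.2 ⟨ht.1, hlt⟩]

theorem continuous_polygonalLine {E : Type*} [AddCommGroup E] [Module ℝ E] [TopologicalSpace E]
    [IsTopologicalAddGroup E] [ContinuousSMul ℝ E] (a : ℤ → E) : Continuous (polygonalLine a) := by
  have hfin : LocallyFinite fun k : ℤ => Icc (k : ℝ) (k + 1) :=
    locallyFinite_Icc_of_tendsto tendsto_intCast_atTop_atTop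
      (tendsto_atBot_add_const_right _ 1 (tendsto_intCast_atBot_iff.2 tendsto_id))
  refine hfin.continuous (iUnion_Icc_intCast ℝ) (fun k => isClosed_Icc) fun k => ?_
  refine ContinuousOn.congr ?_ fun t => polygonalLine_eq_of_mem_Icc a
  have := AffineMap.lineMap_continuous (p := a k) (q := a (k + 1)) (R := ℝ)
  fun_prop

theorem IsLatticeStep.eq_or {d : ℤ × ℤ} (hd : IsLatticeStep d) :
    d = (1, 0) ∨ d = (0, 1) ∨ d = (-1, 1) ∨ d = (-1, 0) ∨ d = (0, -1) ∨ d = (1, -1) := by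
  obtain ⟨d₁, d₂⟩ := d
  simp only [IsLatticeStep, ne_eq, Prod.mk.injEq, Prod.mk_eq_zero, mem_Icc] at hd ⊢
  omega

theorem IsLatticeStep.eq_of_smul_sub_smul_eq {d d' z : ℤ × ℤ} (hd : IsLatticeStep d)
    (hd' : IsLatticeStep d') {r r' : ℝ} (hr : r ∈ Ico (0 : ℝ) 1) (hr' : r' ∈ Ico (0 : ℝ) 1)
    (h₁ : (z.1 : ℝ) = r * d.1 - r' * d'.1) (h₂ : (z.2 : ℝ) = r * d.2 - r' * d'.2) :
    r = r' ∧ z = 0 ∨ z = d ∧ -z = d' := by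
  obtain ⟨z₁, z₂⟩ := z
  obtain ⟨hr0, hr1⟩ := hr
  obtain ⟨hr0', hr1'⟩ := hr'
  have hsmall {m : ℤ} (hm : (-2 : ℝ) < m) (hm' : (m : ℝ) < 2) : m = -1 ∨ m = 0 ∨ m = 1 := by
    have : -2 < m := by exact_mod_cast hm
    have : m < 2 := by exact_mod_cast hm'
    omega
  rcases hd.eq_or with rfl | rfl | rfl | rfl | rfl | rfl <;>
    rcases hd'.eq_or with rfl | rfl | rfl | rfl | rfl | rfl <;>
    push_cast at h₁ h₂ <;>
    obtain rfl | rfl | rfl := hsmall (m := z₁) (by linarith) (by linarith) <;>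
    obtain rfl | rfl | rfl := hsmall (m := z₂) (by linarith) (by linarith) <;>
    push_cast at h₁ h₂ <;>
    first
    | exact .inr ⟨rfl, rfl⟩
    | exact .inl ⟨by linarith, rfl⟩
    | linarith

/-- A point of `ℤ × ℤ` as a point of the plane. -/
def latticePoint : ℤ × ℤ →+ Plane := (Int.castAddHom ℝ).prodMap (Int.castAddHom ℝ)

theorem latticePoint_apply (z : ℤ × ℤ) : latticePoint z = ((z.1 : ℝ), (z.2 : ℝ)) := rfl

theorem IsLatticeStep.norm_latticePoint_le {d : ℤ × ℤ} (hd : IsLatticeStep d) :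
    ‖latticePoint d‖ ≤ 1 := by
  rw [latticePoint_apply, Prod.norm_def, sup_le_iff, Real.norm_eq_abs, Real.norm_eq_abs]
  dsimp only
  exact_mod_cast And.intro (abs_le.2 hd.2.1) (abs_le.2 hd.2.2.1)

theorem polygonalLine_latticePoint_injective {a : ℤ → ℤ × ℤ} (ha : Function.Injective a)
    (hstep : ∀ k, IsLatticeStep (a (k + 1) - a k)) :
    Function.Injective (polygonalLine (latticePoint ∘ a)) := by
  intro t t' h
  have h' := Prod.ext_iff.1 h
  simp only [polygonalLine, AffineMap.lineMap_apply_module', Function.comp_apply,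
    latticePoint_apply, Prod.fst_add, Prod.snd_add, Prod.smul_fst, Prod.smul_snd,
    smul_eq_mul] at h'
  rcases (hstep ⌊t⌋).eq_of_smul_sub_smul_eq (z := a ⌊t'⌋ - a ⌊t⌋) (hstep ⌊t'⌋)
    ⟨Int.fract_nonneg t, Int.fract_lt_one t⟩ ⟨Int.fract_nonneg t', Int.fract_lt_one t'⟩
    (by push_cast [Prod.fst_sub] at h' ⊢; linarith)
    (by push_cast [Prod.snd_sub] at h' ⊢; linarith) with ⟨hfract, hz⟩ | ⟨hz, hz'⟩
  · rw [← Int.floor_add_fract t, ← Int.floor_add_fract t', hfract, ha (sub_eq_zero.1 hz)]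
  · have hfloor : ⌊t'⌋ = ⌊t⌋ + 1 := ha (sub_left_inj.1 hz)
    have hfloor' : ⌊t⌋ = ⌊t'⌋ + 1 := ha (sub_left_inj.1 ((neg_sub _ _).symm.trans hz'))
    omega

end PolygonalLine

/-- Twice the midpoint of an edge of the triangular lattice. -/
def doubledMidpoint (e : (ℤ × ℤ) × ℤ × ℤ) : ℤ × ℤ := 2 • e.1 + e.2

section DoubledMidpoint

variable {c : Set (ℤ × ℤ)} {e e' : (ℤ × ℤ) × ℤ × ℤ}

theorem injOn_doubledMidpoint : InjOn doubledMidpoint (boundaryEdges c) := by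
  rintro e ⟨-, hzd, -, h₁, h₂, h₁₂⟩ e' ⟨hz', -, -, h₁', h₂', h₁₂'⟩ h
  have hcases : e = e' ∨ e'.1 = e.1 + e.2 := by
    simp only [doubledMidpoint, two_nsmul, Prod.ext_iff, Prod.fst_add, Prod.snd_add, mem_Icc] at *
    omega
  exact hcases.resolve_right fun h => hzd (h ▸ hz')

theorem isLatticeStep_doubledMidpoint_nextEdge_sub (hd : IsLatticeStep e.2) :
    IsLatticeStep (doubledMidpoint (nextEdge c e) - doubledMidpoint e) := by
  unfold nextEdge
  split_ifs
  · convert hd.rotate using 1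
    calc doubledMidpoint (e.1 + sixthTurn e.2, sixthTurn.symm e.2) - doubledMidpoint e
      _ = sixthTurn e.2 + (sixthTurn e.2 + sixthTurn.symm e.2 - e.2) := by
        simp only [doubledMidpoint]; abel
      _ = sixthTurn e.2 := by rw [sixthTurn_add_sixthTurn_symm, sub_self, add_zero]
  · convert hd.rotate.rotate using 1
    calc doubledMidpoint (e.1, sixthTurn e.2) - doubledMidpoint e
      _ = (sixthTurn e.2 + sixthTurn.symm e.2 - e.2) - sixthTurn.symm e.2 := by
        simp only [doubledMidpoint]; abel
      _ = sixthTurn (sixthTurn e.2) := by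
        rw [sixthTurn_add_sixthTurn_symm, sub_self, zero_sub, sixthTurn_sixthTurn]

end DoubledMidpoint

/-- The polygonal line through the midpoints of the edges `s k`. -/
def midpointLine (s : ℤ → (ℤ × ℤ) × ℤ × ℤ) (t : ℝ) : Plane :=
  (2⁻¹ : ℝ) • polygonalLine (latticePoint ∘ doubledMidpoint ∘ s) t

namespace IsInterface

variable {c : Set (ℤ × ℤ)} {s : ℤ → (ℤ × ℤ) × ℤ × ℤ}

theorem isLatticeStep_doubledMidpoint_sub (hs : IsInterface c s) (k : ℤ) :
    IsLatticeStep (doubledMidpoint (s (k + 1)) - doubledMidpoint (s k)) :=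
  hs.add_one k ▸ isLatticeStep_doubledMidpoint_nextEdge_sub (hs.mem k).2.2

theorem dist_midpointLine_le (hs : IsInterface c s) (t : ℝ) :
    dist (midpointLine s t) (latticePoint (s ⌊t⌋).1) ≤ 1 ∧
      dist (midpointLine s t) (latticePoint ((s ⌊t⌋).1 + (s ⌊t⌋).2)) ≤ 1 := by
  set z := latticePoint (s ⌊t⌋).1
  set d := latticePoint (s ⌊t⌋).2
  set m := latticePoint (doubledMidpoint (s (⌊t⌋ + 1)) - doubledMidpoint (s ⌊t⌋))
  have hd : ‖d‖ ≤ 1 := (hs.mem ⌊t⌋).2.2.norm_latticePoint_le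
  have hm : ‖Int.fract t • m‖ ≤ 1 := by
    rw [norm_smul, Real.norm_of_nonneg (Int.fract_nonneg t)]
    exact mul_le_one₀ (Int.fract_lt_one t).le (norm_nonneg _)
      (hs.isLatticeStep_doubledMidpoint_sub ⌊t⌋).norm_latticePoint_le
  have hline : midpointLine s t = (2⁻¹ : ℝ) • (Int.fract t • m + (2 • z + d)) := by
    simp only [midpointLine, polygonalLine, AffineMap.lineMap_apply_module', Function.comp_apply, m,
      z, d, ← map_sub, ← map_nsmul, ← map_add, doubledMidpoint]
  have hhalf {v : Plane} (hv : ‖v‖ ≤ 1) : ‖(2⁻¹ : ℝ) • (Int.fract t • m + v)‖ ≤ 1 := by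
    rw [norm_smul]
    have := norm_add_le (Int.fract t • m) v
    norm_num
    linarith
  rw [map_add, dist_eq_norm, dist_eq_norm, hline]
  refine ⟨?_, ?_⟩
  · convert hhalf hd using 1
    congr 1
    module
  · convert hhalf ((norm_neg d).trans_le hd) using 1
    congr 1
    module

theorem tendsto_midpointLine_atTop (hs : IsInterface c s)
    (htop : Tendsto (fun k => (s k).1.2) atTop atTop) :
    Tendsto (fun t => (midpointLine s t).2) atTop atTop := by
  have hfloor : Tendsto (fun t : ℝ => ((s ⌊t⌋).1.2 : ℝ) - 1) atTop atTop :=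
    tendsto_atTop_add_const_right _ _
      (tendsto_intCast_atTop_atTop.comp (htop.comp tendsto_floor_atTop))
  refine tendsto_atTop_mono (fun t => ?_) hfloor
  have := abs_le.1 ((le_max_right _ _).trans (hs.dist_midpointLine_le t).1)
  simp only [latticePoint_apply] at this
  linarith [this.1]

theorem tendsto_midpointLine_atBot (hs : IsInterface c s)
    (hbot : Tendsto (fun k => (s k).1.2) atBot atBot) :
    Tendsto (fun t => (midpointLine s t).2) atBot atBot := by
  have hfloor : Tendsto (fun t : ℝ => ((s ⌊t⌋).1.2 : ℝ) + 1) atBot atBot :=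
    tendsto_atBot_add_const_right _ _
      (tendsto_intCast_atBot_iff.2 (hbot.comp tendsto_floor_atBot))
  refine tendsto_atBot_mono (fun t => ?_) hfloor
  have := abs_le.1 ((le_max_right _ _).trans (hs.dist_midpointLine_le t).1)
  simp only [latticePoint_apply] at this
  linarith [this.2]

theorem isEssLinePlane_midpointLine (hs : IsInterface c s) (hinj : Function.Injective s)
    (htop : Tendsto (fun k => (s k).1.2) atTop atTop)
    (hbot : Tendsto (fun k => (s k).1.2) atBot atBot) : IsEssLinePlane (midpointLine s) := by
  refine IsEssLinePlane.of_tendsto ((continuous_polygonalLine _).const_smul (2⁻¹ : ℝ)) ?_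
    (hs.tendsto_midpointLine_atTop htop) (hs.tendsto_midpointLine_atBot hbot)
  have hmid : Function.Injective (doubledMidpoint ∘ s) := fun i j h =>
    hinj (injOn_doubledMidpoint (hs.mem i) (hs.mem j) h)
  exact (smul_right_injective Plane (by norm_num : (2⁻¹ : ℝ) ≠ 0)).comp
    (polygonalLine_latticePoint_injective hmid hs.isLatticeStep_doubledMidpoint_sub)

end IsInterface

section Transition

/-- A function on the plane passing from the value `0` in the far west to the value `1` in the far
east, locally uniformly in the second coordinate. -/
def IsTransition (f : Plane → ℝ) : Prop :=
  ∀ y : ℝ, (∀ᶠ p in atBot ×ˢ 𝓝 y, f p = 0) ∧ ∀ᶠ p in atTop ×ˢ 𝓝 y, f p = 1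

variable {f : Plane → ℝ}

theorem IsTransition.exists_band (hf : IsTransition f) (y : ℝ) : ∃ a b r, 0 < r ∧
    ∀ p : Plane, dist p.2 y ≤ r → (p.1 ≤ a → f p = 0) ∧ (b ≤ p.1 → f p = 1) := by
  obtain ⟨⟨a, r⟩, hr, hwest⟩ :=
    (atBot_basis.prod Metric.nhds_basis_closedBall).eventually_iff.1 (hf y).1
  obtain ⟨⟨b, r'⟩, hr', heast⟩ :=
    (atTop_basis.prod Metric.nhds_basis_closedBall).eventually_iff.1 (hf y).2
  exact ⟨a, b, min r r', lt_min hr.2 hr'.2, fun p hp =>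
    ⟨fun hpa => hwest ⟨hpa, hp.trans (min_le_left _ _)⟩,
      fun hpb => heast ⟨hpb, hp.trans (min_le_right _ _)⟩⟩⟩

theorem IsTransition.exists_eventually_dist_le (hf : IsTransition f) (hc : Continuous f)
    {δ : ℝ} (hδ : 0 < δ) (y₀ : ℝ) :
    ∃ ε ∈ Ioc (0 : ℝ) 1, ∀ᶠ y in 𝓝 y₀, ∀ x p, dist (x, y) p ≤ ε → dist (f (x, y)) (f p) ≤ δ := by
  obtain ⟨a, b, r, hr, hband⟩ := hf.exists_band y₀
  have hK : IsCompact (Icc (a - 1) (b + 1) ×ˢ Metric.closedBall y₀ r) :=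
    isCompact_Icc.prod (isCompact_closedBall _ _)
  obtain ⟨ε, hε, huc⟩ := Metric.mem_uniformity_dist.1 <|
    hK.uniformContinuousAt_of_continuousAt f (fun p _ => hc.continuousAt)
      (Metric.dist_mem_uniformity hδ)
  set ρ := min (ε / 2) (min 1 (r / 2))
  have hρ : 0 < ρ := by positivity
  have hρ1 : ρ ≤ 1 := (min_le_right _ _).trans (min_le_left _ _)
  have hρr : ρ ≤ r / 2 := (min_le_right _ _).trans (min_le_right _ _)
  have hρε : ρ < ε := (min_le_left _ _).trans_lt (half_lt_self hε)
  refine ⟨ρ, ⟨hρ, hρ1⟩, ?_⟩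
  filter_upwards [Metric.closedBall_mem_nhds y₀ (half_pos hr)] with y hy x p hp
  have hy : dist y y₀ ≤ r / 2 := hy
  have hp_fst : |x - p.1| ≤ 1 := (le_max_left _ _).trans (hp.trans hρ1)
  have hp_snd : dist p.2 y ≤ r / 2 :=
    (dist_comm p.2 y).trans_le ((le_max_right _ _).trans (hp.trans hρr))
  have hpy : dist p.2 y₀ ≤ r := by linarith [dist_triangle p.2 y y₀]
  have hxy := hband (x, y) (by simp only; linarith)
  rw [abs_le] at hp_fst
  rcases lt_or_ge x (a - 1) with hwest | hwest
  · rw [hxy.1 (by simp only; linarith), (hband p hpy).1 (by linarith), dist_self]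
    exact hδ.le
  rcases lt_or_ge (b + 1) x with heast | heast
  · rw [hxy.2 (by simp only; linarith), (hband p hpy).2 (by linarith), dist_self]
    exact hδ.le
  · exact (huc (hp.trans_lt hρε) ⟨⟨hwest, heast⟩, show dist y y₀ ≤ r by linarith⟩).le

theorem IsTransition.exists_continuous_modulus (hf : IsTransition f) (hc : Continuous f)
    {δ : ℝ} (hδ : 0 < δ) : ∃ ε : C(ℝ, ℝ), (∀ y, ε y ∈ Ioc (0 : ℝ) 1) ∧
      ∀ x y p, dist (x, y) p ≤ ε y → dist (f (x, y)) (f p) ≤ δ := by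
  obtain ⟨ε, hε⟩ := exists_continuous_forall_mem_convex_of_local_const
    (t := fun y => Ioc (0 : ℝ) 1 ∩ {ε | ∀ x p, dist (x, y) p ≤ ε → dist (f (x, y)) (f p) ≤ δ})
    (fun y => (convex_Ioc 0 1).inter <| Set.OrdConnected.convex <| IsLowerSet.ordConnected
      fun ε ε' hle hmod x p hp => hmod x p (hp.trans hle))
    (fun y₀ => by
      obtain ⟨ε, hε, hmod⟩ := hf.exists_eventually_dist_le hc hδ y₀
      exact ⟨ε, hmod.mono fun y hy => ⟨hε, hy⟩⟩)
  exact ⟨ε, fun y => (hε y).1, fun x y => (hε y).2 x⟩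

theorem exists_orderIso_hasDerivAt {ε : ℝ → ℝ} (hc : Continuous ε)
    (hε : ∀ y, ε y ∈ Ioc (0 : ℝ) 1) : ∃ ν : ℝ ≃o ℝ, ∀ v, HasDerivAt ν (ε (ν v)) v := by
  have hinv : Continuous fun y => (ε y)⁻¹ := hc.inv₀ fun y => (hε y).1.ne'
  let μ : ℝ → ℝ := fun y => ∫ t in (0 : ℝ)..y, (ε t)⁻¹
  have hμ (y) : HasDerivAt μ (ε y)⁻¹ y := (hinv.integral_hasStrictDerivAt 0 y).hasDerivAt
  have hμc : Continuous μ := continuous_iff_continuousAt.2 fun y => (hμ y).continuousAt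
  have hmono : StrictMono μ := strictMono_of_deriv_pos fun y => (hμ y).deriv ▸ inv_pos.2 (hε y).1
  have hsub : Monotone (μ - id) := by
    have hderiv (y) := (hμ y).sub (hasDerivAt_id y)
    refine monotone_of_deriv_nonneg (fun y => (hderiv y).differentiableAt) fun y => ?_
    rw [(hderiv y).deriv]
    exact sub_nonneg.2 ((one_le_inv₀ (hε y).1).2 (hε y).2)
  have hμ0 : μ 0 = 0 := intervalIntegral.integral_same
  have htop : Tendsto μ atTop atTop := by
    refine tendsto_atTop_mono' _ ?_ tendsto_id
    filter_upwards [eventually_ge_atTop 0] with y hy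
    simpa [hμ0] using hsub hy
  have hbot : Tendsto μ atBot atBot := by
    refine tendsto_atBot_mono' _ ?_ tendsto_id
    filter_upwards [eventually_le_atBot 0] with y hy
    simpa [hμ0] using hsub hy
  let e := hmono.orderIsoOfSurjective μ (hμc.surjective htop hbot)
  refine ⟨e.symm, fun v => ?_⟩
  simpa using HasDerivAt.of_local_left_inverse e.symm.continuous.continuousAt (hμ (e.symm v))
    (inv_ne_zero (hε _).1.ne') (Eventually.of_forall e.apply_symm_apply)

theorem dist_comp_orderIso_le {α : Type*} [PseudoMetricSpace α] {g : ℝ → α} {ε : ℝ → ℝ}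
    {ν : ℝ ≃o ℝ} {δ : ℝ} (hε : ∀ y, 0 ≤ ε y)
    (hg : ∀ y y', dist y y' ≤ ε y → dist (g y) (g y') ≤ δ) (hν : ∀ v, HasDerivAt ν (ε (ν v)) v)
    {v v' : ℝ} (hv : dist v v' ≤ 1) : dist (g (ν v)) (g (ν v')) ≤ 2 * δ := by
  wlog hlt : v < v' generalizing v v'
  · rcases (not_lt.1 hlt).eq_or_lt with rfl | hlt
    · have hδ := hg (ν v') (ν v') (by simpa using hε _)
      rw [dist_self] at hδ ⊢
      linarith
    · rw [dist_comm] at hv ⊢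
      exact this hv hlt
  obtain ⟨c, ⟨hvc, hcv'⟩, hslope⟩ := exists_hasDerivAt_eq_slope ν (fun v => ε (ν v)) hlt
    ν.continuous.continuousOn fun v _ => hν v
  have hvc := ν.strictMono hvc
  have hcv' := ν.strictMono hcv'
  have hν_le : ν v' - ν v ≤ ε (ν c) := by
    rw [eq_div_iff (sub_pos.2 hlt).ne'] at hslope
    rw [dist_comm, Real.dist_eq, abs_of_pos (sub_pos.2 hlt)] at hv
    exact hslope ▸ mul_le_of_le_one_right (hε _) hv
  have hleft : dist (ν c) (ν v) ≤ ε (ν c) := by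
    rw [Real.dist_eq, abs_of_pos (sub_pos.2 hvc)]
    linarith
  have hright : dist (ν c) (ν v') ≤ ε (ν c) := by
    rw [dist_comm, Real.dist_eq, abs_of_pos (sub_pos.2 hcv')]
    linarith
  calc dist (g (ν v)) (g (ν v')) ≤ dist (g (ν c)) (g (ν v)) + dist (g (ν c)) (g (ν v')) :=
        dist_triangle_left _ _ _
    _ ≤ 2 * δ := by linarith [hg _ _ hleft, hg _ _ hright]

theorem IsTransition.comp {Φ : Plane → Plane} (hf : IsTransition f) {φ : ℝ → ℝ}
    (hwest : ∀ y, Tendsto Φ (atBot ×ˢ 𝓝 y) (atBot ×ˢ 𝓝 (φ y)))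
    (heast : ∀ y, Tendsto Φ (atTop ×ˢ 𝓝 y) (atTop ×ˢ 𝓝 (φ y))) : IsTransition (f ∘ Φ) :=
  fun y => ⟨(hwest y).eventually (hf (φ y)).1, (heast y).eventually (hf (φ y)).2⟩

theorem IsTransition.comp_rowScaling {ε : C(ℝ, ℝ)} (hε : ∀ y, 0 < ε y) (hf : IsTransition f) :
    IsTransition fun p => f (p.1 * ε p.2, p.2) := by
  have hlim {l : Filter ℝ} (y) : Tendsto (fun p : Plane => ε p.2) (l ×ˢ 𝓝 y) (𝓝 (ε y)) :=
    (ε.continuous.tendsto y).comp tendsto_snd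
  exact hf.comp (φ := id)
    (fun y => (tendsto_fst.atBot_mul_pos (hε y) (hlim y)).prodMk tendsto_snd)
    (fun y => (tendsto_fst.atTop_mul_pos (hε y) (hlim y)).prodMk tendsto_snd)

theorem IsTransition.comp_orderIso (ν : ℝ ≃o ℝ) (hf : IsTransition f) :
    IsTransition fun p => f (p.1, ν p.2) :=
  hf.comp (fun y => tendsto_id.prodMap (ν.continuous.tendsto y))
    (fun y => tendsto_id.prodMap (ν.continuous.tendsto y))

theorem IsEssLinePlane.rescale {G : ℝ → Plane} (hG : IsEssLinePlane G) (ν : ℝ ≃o ℝ) {ε : C(ℝ, ℝ)}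
    (hε : ∀ y, 0 < ε y) :
    IsEssLinePlane fun t => ((G t).1 * ε (ν (G t).2), ν (G t).2) := by
  have hGc := hG.continuous
  have hνc := ν.continuous
  refine .of_tendsto (by fun_prop) (fun t t' h => hG.2.1 ?_)
    (ν.tendsto_atTop.comp hG.2.2.2.1) (ν.tendsto_atBot.comp hG.2.2.2.2)
  obtain ⟨hfst, hsnd⟩ := Prod.mk.inj h
  rw [hsnd] at hfst
  exact Prod.ext (mul_right_cancel₀ (hε _).ne' hfst) (ν.injective hsnd)

theorem IsTransition.isLeftSet (hf : IsTransition f) :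
    IsLeftSet {z : ℤ × ℤ | f (latticePoint z) < 1 / 2} := by
  intro j
  have hrow {l : Filter ℤ} {l' : Filter ℝ} (h : Tendsto ((↑) : ℤ → ℝ) l l') :
      Tendsto (fun i => latticePoint (i, j)) l (l' ×ˢ 𝓝 (j : ℝ)) :=
    h.prodMk tendsto_const_nhds
  refine ⟨((hrow (tendsto_intCast_atBot_iff.2 tendsto_id)).eventually (hf j).1).mono fun i hi => ?_,
    ((hrow tendsto_intCast_atTop_atTop).eventually (hf j).2).mono fun i hi => ?_⟩
  · simp only [mem_ofPred_eq, hi, one_half_pos]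
  · simp only [mem_ofPred_eq, hi, not_lt, one_half_lt_one.le]

theorem IsTransition.exists_essLine_of_dist_lt (hf : IsTransition f)
    (hslow : ∀ p p', dist p p' ≤ 1 → dist (f p) (f p') < 1 / 2) :
    ∃ G, IsEssLinePlane G ∧ ∀ t, f (G t) ∈ Ioo (0 : ℝ) 1 := by
  obtain ⟨s, hs, hinj, htop, hbot⟩ := hf.isLeftSet.exists_isInterface
  refine ⟨midpointLine s, hs.isEssLinePlane_midpointLine hinj htop hbot, fun t => ?_⟩
  obtain ⟨hdist_left, hdist_right⟩ := hs.dist_midpointLine_le t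
  obtain ⟨hleft, hright, -⟩ := hs.mem ⌊t⌋
  have hleft : f (latticePoint (s ⌊t⌋).1) < 1 / 2 := hleft
  have hright : 1 / 2 ≤ f (latticePoint ((s ⌊t⌋).1 + (s ⌊t⌋).2)) := not_lt.1 hright
  have hslow_left := abs_lt.1 (hslow _ _ hdist_left)
  have hslow_right := abs_lt.1 (hslow _ _ hdist_right)
  constructor <;> linarith

-- The rows are first stretched by a factor depending on the row, which makes `f` vary slowly in the
-- horizontal direction, and then reparametrized, which makes it vary slowly in the vertical one.
theorem IsTransition.exists_essLine (hf : IsTransition f) (hc : Continuous f) :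
    ∃ G, IsEssLinePlane G ∧ ∀ t, f (G t) ∈ Ioo (0 : ℝ) 1 := by
  have hδ : (0 : ℝ) < 1 / 8 := by norm_num
  obtain ⟨ε, hε, hmod⟩ := hf.exists_continuous_modulus hc hδ
  have hf₁ := hf.comp_rowScaling fun y => (hε y).1
  obtain ⟨ε₁, hε₁, hmod₁⟩ := hf₁.exists_continuous_modulus (by fun_prop) hδ
  obtain ⟨ν, hν⟩ := exists_orderIso_hasDerivAt ε₁.continuous hε₁
  have hslow (p p' : Plane) (h : dist p p' ≤ 1) :
      dist (f (p.1 * ε (ν p.2), ν p.2)) (f (p'.1 * ε (ν p'.2), ν p'.2)) < 1 / 2 := by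
    obtain ⟨hfst, hsnd⟩ := max_le_iff.1 h
    have hhor : dist (f (p.1 * ε (ν p.2), ν p.2)) (f (p'.1 * ε (ν p.2), ν p.2)) ≤ 1 / 8 := by
      refine hmod _ _ _ ?_
      rw [dist_prod_same_right, Real.dist_eq, ← sub_mul, abs_mul, abs_of_pos (hε _).1]
      exact mul_le_of_le_one_left (hε _).1.le hfst
    have hver : dist (f (p'.1 * ε (ν p.2), ν p.2)) (f (p'.1 * ε (ν p'.2), ν p'.2)) ≤ 2 * (1 / 8) :=
      dist_comp_orderIso_le (g := fun y => f (p'.1 * ε y, y)) (fun y => (hε₁ y).1.le)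
        (fun y y' hy => hmod₁ p'.1 y (p'.1, y') (by rwa [dist_prod_same_left])) hν hsnd
    linarith [dist_triangle (f (p.1 * ε (ν p.2), ν p.2)) (f (p'.1 * ε (ν p.2), ν p.2))
      (f (p'.1 * ε (ν p'.2), ν p'.2))]
  obtain ⟨G, hG, hGf⟩ := (hf₁.comp_orderIso ν).exists_essLine_of_dist_lt hslow
  exact ⟨_, hG.rescale ν fun y => (hε y).1, hGf⟩

end Transition

theorem exists_essLine_between {C V : Set Plane} (hC : IsClosed C) (hV : IsOpen V) (hCV : C ⊆ V)
    (hwest : ∀ y : ℝ, ∀ᶠ p in atBot ×ˢ 𝓝 y, p ∈ C) (heast : ∀ y : ℝ, ∀ᶠ p in atTop ×ˢ 𝓝 y, p ∉ V) :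
    ∃ G, IsEssLinePlane G ∧ range G ⊆ V \ C := by
  obtain ⟨f, hfC, hfV, -⟩ := exists_continuous_zero_one_of_isClosed hC hV.isClosed_compl
    (disjoint_compl_right_iff_subset.2 hCV)
  have hf : IsTransition f := fun y =>
    ⟨(hwest y).mono fun _ hp => hfC hp, (heast y).mono fun _ hp => hfV hp⟩
  obtain ⟨G, hG, hGf⟩ := hf.exists_essLine f.continuous
  refine ⟨G, hG, range_subset_iff.2 fun t => ⟨not_not.1 fun hGV => ?_, fun hGC => ?_⟩⟩
  · exact (hGf t).2.ne (hfV hGV)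
  · exact (hGf t).1.ne' (hfC hGC)

section EssentialHomeo

/-- The filter of neighbourhoods of the east end of the plane, generated by the complements of the
left regions of essential lines. Essential homeomorphisms preserve it, but not the filters
`atTop ×ˢ 𝓝 y`. -/
def eastFilter : Filter Plane :=
  ⨅ Γ : {Γ // IsEssLinePlane Γ}, 𝓟 (Lset (range Γ.1))ᶜ

theorem prod_nhds_le_eastFilter (y : ℝ) : atTop ×ˢ 𝓝 y ≤ eastFilter :=
  le_iInf fun Γ => le_principal_iff.2 (Γ.2.eventually_notMem_Lset y)

theorem IsEssLinePlane.compl_Lset_mem_eastFilter {Γ : ℝ → Plane} (hΓ : IsEssLinePlane Γ) :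
    (Lset (range Γ))ᶜ ∈ eastFilter :=
  mem_iInf_of_mem ⟨Γ, hΓ⟩ (mem_principal_self _)

namespace EssentialHomeo

variable {H K : Plane ≃ₜ Plane}

theorem tendsto_symm_eastFilter (hH : EssentialHomeo H) :
    Tendsto H.symm eastFilter eastFilter := by
  refine tendsto_iInf.2 fun Γ => tendsto_principal.2 ?_
  filter_upwards [(hH.1 Γ.1 Γ.2).compl_Lset_mem_eastFilter] with p hp hpΓ
  rw [← hH.2 Γ.1 Γ.2] at hp
  exact hp ⟨_, hpΓ, H.apply_symm_apply p⟩

theorem one : EssentialHomeo 1 :=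
  ⟨fun _ hΓ => hΓ, fun _ _ => image_id _⟩

theorem mul (hH : EssentialHomeo H) (hK : EssentialHomeo K) : EssentialHomeo (H * K) :=
  ⟨fun Γ hΓ => hH.1 _ (hK.1 Γ hΓ), fun Γ hΓ => by
    rw [homeomorph_coe_mul, image_comp, hK.2 Γ hΓ, hH.2 _ (hK.1 Γ hΓ), Function.comp_assoc]⟩

theorem pow (hH : EssentialHomeo H) (n : ℕ) : EssentialHomeo (H ^ n) := by
  induction n with
  | zero => exact one
  | succ n ih => exact pow_succ H n ▸ ih.mul hH

theorem lineLT_iff_expands {Γ : ℝ → Plane} (hH : EssentialHomeo H) (hΓ : IsEssLinePlane Γ) :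
    lineLT (range Γ) (H '' range Γ) ↔ Expands H (Lset (range Γ)) := by
  rw [lineLT, Expands, hH.2 Γ hΓ, range_comp]

variable {ι : Type*} {H : ι → Plane ≃ₜ Plane}

theorem exists_isPreconnected_forall_expands [Finite ι] {q : ι → ℕ} {Γ : ℝ → Plane}
    (hH : ∀ i, EssentialHomeo (H i)) (hcomm : ∀ i j, Commute (H i) (H j)) (hq : ∀ i, 0 < q i)
    (hΓ : IsEssLinePlane Γ) (hexp : ∀ i, Expands (H i ^ q i) (Lset (range Γ))) :
    ∃ U, IsOpen U ∧ IsPreconnected U ∧ Lset (range Γ) ⊆ U ∧ Uᶜ ∈ eastFilter ∧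
      ∀ i, Expands (H i) U := by
  obtain ⟨U, hU, hΓU, hUeast, hUexp⟩ := exists_forall_expands_of_expands_pow hq
    (fun i => (hH i).tendsto_symm_eastFilter) hcomm hΓ.isOpen_Lset hΓ.compl_Lset_mem_eastFilter hexp
  obtain ⟨z, hz⟩ := (hΓ.eventually_mem_Lset 0).exists
  have hΓUz : Lset (range Γ) ⊆ connectedComponentIn U z :=
    hΓ.isPreconnected_Lset.subset_connectedComponentIn hz hΓU
  refine ⟨connectedComponentIn U z, hU.connectedComponentIn, isPreconnected_connectedComponentIn,
    hΓUz, mem_of_superset hUeast (compl_subset_compl.2 (connectedComponentIn_subset _ _)),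
    fun i => (hUexp i).connectedComponentIn ?_⟩
  obtain ⟨w, hw, hw'⟩ :=
    ((hΓ.eventually_mem_Lset 0).and (((hH i).1 Γ hΓ).eventually_mem_Lset 0)).exists
  rw [← (hH i).2 Γ hΓ] at hw'
  exact ⟨w, hΓUz hw, image_mono hΓUz hw'⟩

theorem exists_essLine_forall_lineLT [Finite ι] [Nonempty ι] {U : Set Plane}
    (hH : ∀ i, EssentialHomeo (H i)) (hU : IsOpen U) (hUconn : IsPreconnected U)
    (hUwest : ∀ y : ℝ, ∀ᶠ p in atBot ×ˢ 𝓝 y, p ∈ U) (hUeast : Uᶜ ∈ eastFilter)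
    (hexp : ∀ i, Expands (H i) U) :
    ∃ Γ, IsEssLinePlane Γ ∧ ∀ i, lineLT (range Γ) (H i '' range Γ) := by
  have hVeast (y : ℝ) : ∀ᶠ p in atTop ×ˢ 𝓝 y, p ∉ ⋂ i, H i '' U := by
    obtain ⟨i⟩ := ‹Nonempty ι›
    filter_upwards [prod_nhds_le_eastFilter y ((hH i).tendsto_symm_eastFilter hUeast)] with p hp hpV
    obtain ⟨u, hu, rfl⟩ := mem_iInter.1 hpV i
    exact hp (by simpa using hu)
  obtain ⟨G, hG, hGV⟩ := exists_essLine_between isClosed_closure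
    (isOpen_iInter_of_finite fun i => (H i).isOpenMap U hU) (subset_iInter hexp)
    (fun y => (hUwest y).mono fun p hp => subset_closure hp) hVeast
  obtain ⟨p, hpU, hpG⟩ := ((hUwest 0).and (hG.eventually_mem_Lset 0)).exists
  have hdisj : Disjoint U (range G) :=
    disjoint_left.2 fun p hp hpG => (hGV hpG).2 (subset_closure hp)
  have hUG : U ⊆ Lset (range G) := hG.subset_Lset hUconn hdisj ⟨p, hpU, hpG⟩
  refine ⟨G, hG, fun i => ?_⟩
  rw [← range_comp]
  refine hG.lineLT_of_range_subset ((hH i).1 G hG) ?_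
  calc range G ⊆ H i '' U := fun p hp => mem_iInter.1 (hGV hp).1 i
    _ ⊆ H i '' Lset (range G) := image_mono hUG
    _ = Lset (range (H i ∘ G)) := (hH i).2 G hG

end EssentialHomeo

end EssentialHomeo

/-- Lemma 3.1: if `H₁, …, H_p` are pairwise commuting essential homeomorphisms of ℝ² and
there is an essential line `Γ` with `Γ < H_i^{q_i}(Γ)` for all `i`, then there is an
essential line `Γ'` with `Γ' < H_i(Γ')` for all `i`. -/
theorem commuting_essential_homeos_line
    (p : ℕ) (hp : 0 < p) (H : Fin p → (Plane ≃ₜ Plane)) (q : Fin p → ℕ)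
    (hq : ∀ i, 0 < q i)
    (hcomm : ∀ i j : Fin p, ∀ z : Plane, H i (H j z) = H j (H i z))
    (hess : ∀ i, EssentialHomeo (H i))
    (Γ : ℝ → Plane) (hΓ : IsEssLinePlane Γ)
    (hlt : ∀ i, lineLT (Set.range Γ) ((⇑(H i))^[q i] '' Set.range Γ)) :
    ∃ Γ' : ℝ → Plane, IsEssLinePlane Γ' ∧
      ∀ i, lineLT (Set.range Γ') (⇑(H i) '' Set.range Γ') := by
  have hcomm' (i j) : Commute (H i) (H j) := Homeomorph.ext (hcomm i j)
  have hexp (i) : Expands (H i ^ q i) (Lset (range Γ)) := by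
    rw [← ((hess i).pow (q i)).lineLT_iff_expands hΓ, homeomorph_coe_pow]
    exact hlt i
  obtain ⟨U, hU, hUconn, hΓU, hUeast, hUexp⟩ :=
    EssentialHomeo.exists_isPreconnected_forall_expands hess hcomm' hq hΓ hexp
  have : Nonempty (Fin p) := ⟨⟨0, hp⟩⟩
  exact EssentialHomeo.exists_essLine_forall_lineLT hess hU hUconn
    (fun y => (hΓ.eventually_mem_Lset y).mono fun z hz => hΓU hz) hUeast hUexp
end
end

section
/- If f is a homeomorphism of the open annulus 𝔸 isotopic to the identity and satisfying the intersection property, then for any integer q > 1 the homeomorphism f^q also satisfies the intersection property. -/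
open Filter Topology Set

noncomputable section

/-!
The intersection property forces `f` to preserve each end of the annulus, so in logarithmic polar
coordinates `f` extends to a homeomorphism `F` of the plane fixing `0`. If an essential curve `κ`
is disjoint from its image under `F ^ q`, then the component of `0` in the complement of `κ` is
mapped with its closure into itself by `F ^ q` or by its inverse: the only alternative is that this
component and its image cover the plane, but both are bounded. A Urysohn function, evaluated along
orbits, turns such a trapping neighbourhood `U` for `F ^ q` into one, `V`, for `F`. An essential
curve inside `V` and outside the image of the closure of `V` is then disjoint from its own image
under `F`, contradicting the intersection property.

Such a curve is a cycle in the boundary of a finite union of small lattice squares. One of these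
cycles winds around `0` by a discrete Stokes argument: the increments of the logarithm around the
single squares add up to `2 * π * I`, whereas they would add up to `0` if the logarithm had a single
valued branch on the boundary.
-/

section WalkWeight

variable {V M : Type*} [AddCommGroup M] {G : SimpleGraph V} {w : V → V → M}

/-- The total weight of a walk, when `w a b` is the weight of a step from `a` to `b`: the discrete
line integral of `w`. -/
def walkWeight (w : V → V → M) {a b : V} (p : G.Walk a b) : M :=
  (p.darts.map fun d => w d.fst d.snd).sum

@[simp]
theorem walkWeight_nil (a : V) : walkWeight w (.nil : G.Walk a a) = 0 := by
  simp [walkWeight]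

@[simp]
theorem walkWeight_cons {a b c : V} (h : G.Adj a b) (p : G.Walk b c) :
    walkWeight w (.cons h p) = w a b + walkWeight w p := by
  simp [walkWeight]

@[simp]
theorem walkWeight_append {a b c : V} (p : G.Walk a b) (q : G.Walk b c) :
    walkWeight w (p.append q) = walkWeight w p + walkWeight w q := by
  simp [walkWeight]

theorem walkWeight_eq_sum_getVert {a b : V} (p : G.Walk a b) :
    walkWeight w p = ∑ k ∈ Finset.range p.length, w (p.getVert k) (p.getVert (k + 1)) := by
  induction p with
  | nil => simp
  | cons h p ih =>
    rw [walkWeight_cons, ih, SimpleGraph.Walk.length_cons, Finset.sum_range_succ', add_comm]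
    simp

variable (hw : ∀ a b, G.Adj a b → w b a = -w a b)
  (hcycle : ∀ (a : V) (p : G.Walk a a), p.IsCycle → walkWeight w p = 0)
include hw hcycle

theorem walkWeight_cons_eq_zero_of_isPath {a b : V} (h : G.Adj a b) {p : G.Walk b a}
    (hp : p.IsPath) : walkWeight w (.cons h p) = 0 := by
  by_cases hmem : s(a, b) ∈ p.edges
  · rw [hp.eq_adj_toWalk_of_mem_edges (Sym2.eq_swap ▸ hmem)]
    simp [SimpleGraph.Adj.toWalk, hw _ _ h]
  · exact hcycle _ _ ((p.cons_isCycle_iff h).mpr ⟨hp, hmem⟩)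

theorem walkWeight_bypass [DecidableEq V] {a b : V} (p : G.Walk a b) :
    walkWeight w p.bypass = walkWeight w p := by
  induction p with
  | nil => rfl
  | @cons a c b h p ih =>
    rw [walkWeight_cons, ← ih, SimpleGraph.Walk.bypass]
    split_ifs with ha
    · have hloop := walkWeight_cons_eq_zero_of_isPath hw hcycle h (p.bypass_isPath.takeUntil ha)
      rw [walkWeight_cons] at hloop
      conv_rhs => rw [← p.bypass.take_spec ha, walkWeight_append, ← add_assoc, hloop, zero_add]
    · rw [walkWeight_cons]

theorem walkWeight_eq_zero_of_closed {a : V} (p : G.Walk a a) : walkWeight w p = 0 := by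
  classical
  have hnil : p.bypass = .nil := (SimpleGraph.Walk.isPath_iff_nil.mp p.bypass_isPath).eq_nil
  rw [← walkWeight_bypass hw hcycle p, hnil, walkWeight_nil]

theorem exists_potential : ∃ P : V → M, ∀ a b, G.Adj a b → w a b = P b - P a := by
  have hreach (a : V) : G.Reachable (G.connectedComponentMk a).out a :=
    SimpleGraph.ConnectedComponent.exact (Quot.out_eq (G.connectedComponentMk a))
  let p (a : V) : G.Walk (G.connectedComponentMk a).out a := (hreach a).some
  refine ⟨fun a => walkWeight w (p a), fun a b h => ?_⟩
  have hbase : (G.connectedComponentMk b).out = (G.connectedComponentMk a).out := by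
    rw [SimpleGraph.ConnectedComponent.sound h.reachable]
  let q : G.Walk (G.connectedComponentMk a).out b := (p b).copy hbase rfl
  have hq : walkWeight w q = walkWeight w (p b) := by simp [q, walkWeight]
  have hab := walkWeight_eq_zero_of_closed hw hcycle ((p a).append (.cons h q.reverse))
  have hb := walkWeight_eq_zero_of_closed hw hcycle (q.append q.reverse)
  rw [walkWeight_append, walkWeight_cons, ← add_assoc] at hab
  rw [walkWeight_append, hq] at hb
  exact eq_sub_of_add_eq' (add_right_cancel (hab.trans hb.symm))

end WalkWeight

theorem exists_zmod_enumeration_of_isCycle {V : Type*} {G : SimpleGraph V} {a : V}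
    {p : G.Walk a a} (hp : p.IsCycle) :
    ∃ v : ZMod p.length → V, Function.Injective v ∧ ∀ k ≤ p.length, v k = p.getVert k := by
  have hlen := hp.three_le_length
  have : NeZero p.length := ⟨by omega⟩
  refine ⟨fun i => p.getVert i.val, fun i j hij => ?_, fun k hk => ?_⟩
  · exact ZMod.val_injective _ (hp.getVert_injOn' (Nat.le_sub_one_of_lt i.val_lt)
      (Nat.le_sub_one_of_lt j.val_lt) hij)
  · rcases hk.lt_or_eq with hlt | rfl
    · simp [ZMod.val_natCast_of_lt hlt]
    · simp

section HalfPlane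

variable {a b u : ℂ}

theorem ne_zero_of_re_mul_pos (ha : 0 < (u * a).re) : a ≠ 0 := by
  rintro rfl
  simp at ha

theorem log_div_of_re_mul_pos (ha : 0 < (u * a).re) (hb : 0 < (u * b).re) :
    Complex.log (b / a) = Complex.log (u * b) - Complex.log (u * a) := by
  have hu : u ≠ 0 := ne_zero_of_re_mul_pos (u := a) (by rwa [mul_comm])
  have hargs := abs_lt.mp (Complex.abs_arg_lt_pi_div_two_iff.mpr (.inl ha))
  have hargs' := abs_lt.mp (Complex.abs_arg_lt_pi_div_two_iff.mpr (.inl hb))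
  have hexp : b / a = Complex.exp (Complex.log (u * b) - Complex.log (u * a)) := by
    rw [Complex.exp_sub, Complex.exp_log (mul_ne_zero hu (ne_zero_of_re_mul_pos hb)),
      Complex.exp_log (mul_ne_zero hu (ne_zero_of_re_mul_pos ha)), mul_div_mul_left _ _ hu]
  rw [hexp, Complex.log_exp] <;> simp only [Complex.sub_im, Complex.log_im] <;> linarith

theorem re_mul_lineMap_pos (ha : 0 < (u * a).re) (hb : 0 < (u * b).re) {t : ℝ}
    (ht : t ∈ Icc (0 : ℝ) 1) : 0 < (u * AffineMap.lineMap a b t).re := by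
  have hconv : Convex ℝ {z : ℂ | 0 < (u * z).re} :=
    (convex_halfSpace_gt (f := fun z : ℂ => (u * z).re)
      ⟨fun x y => by simp [mul_add], fun c x => by rw [mul_smul_comm, Complex.smul_re]⟩ 0)
  exact hconv.lineMap_mem ha hb ht

end HalfPlane

section Lattice

/-- The vertex `a` of the unit square lattice in `ℂ`, shifted so that the squares are centred at
the Gaussian integers: `a` is the lower left corner of the square centred at `a.1 + a.2 * I`. -/
def latticePt (a : ℤ × ℤ) : ℂ := ⟨a.1 - 1 / 2, a.2 - 1 / 2⟩

/-- Adjacency of vertices of the unit square lattice. -/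
def LatticeAdj (a b : ℤ × ℤ) : Prop := (b.1 - a.1).natAbs + (b.2 - a.2).natAbs = 1

/-- The increment of the logarithm along the edge from `a` to `b`, which stays in a half-plane. -/
def logStep (a b : ℤ × ℤ) : ℂ := Complex.log (latticePt b / latticePt a)

theorem exists_re_mul_latticePt_pos {S : Set (ℤ × ℤ)}
    (hS : (∀ a ∈ S, 1 ≤ a.1) ∨ (∀ a ∈ S, a.1 ≤ 0) ∨ (∀ a ∈ S, 1 ≤ a.2) ∨ (∀ a ∈ S, a.2 ≤ 0)) :
    ∃ u : ℂ, ∀ a ∈ S, 0 < (u * latticePt a).re := by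
  have hpos (m : ℤ) (hm : 1 ≤ m) : (0 : ℝ) < m - 1 / 2 := by
    have : (1 : ℝ) ≤ m := by exact_mod_cast hm
    linarith
  have hneg (m : ℤ) (hm : m ≤ 0) : (0 : ℝ) < 1 / 2 - m := by
    have : (m : ℝ) ≤ 0 := by exact_mod_cast hm
    linarith
  rcases hS with h | h | h | h
  · exact ⟨1, fun a ha => by simpa [latticePt] using hpos _ (h a ha)⟩
  · exact ⟨-1, fun a ha => by simpa [latticePt] using hneg _ (h a ha)⟩
  · exact ⟨-Complex.I, fun a ha => by simpa [latticePt] using hpos _ (h a ha)⟩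
  · exact ⟨Complex.I, fun a ha => by simpa [latticePt] using hneg _ (h a ha)⟩

theorem LatticeAdj.exists_re_mul_pos {a b : ℤ × ℤ} (h : LatticeAdj a b) :
    ∃ u : ℂ, 0 < (u * latticePt a).re ∧ 0 < (u * latticePt b).re := by
  obtain ⟨u, hu⟩ := exists_re_mul_latticePt_pos (S := {a, b}) (by
    unfold LatticeAdj at h
    simp only [mem_insert_iff, mem_singleton_iff, forall_eq_or_imp, forall_eq]
    omega)
  exact ⟨u, hu a (by simp), hu b (by simp)⟩

theorem LatticeAdj.logStep_swap {a b : ℤ × ℤ} (h : LatticeAdj a b) :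
    logStep b a = -logStep a b := by
  obtain ⟨u, ha, hb⟩ := h.exists_re_mul_pos
  rw [logStep, logStep, log_div_of_re_mul_pos ha hb, log_div_of_re_mul_pos hb ha, neg_sub]

section Circulation

variable {M : Type*} [AddCommGroup M]

/-- The counterclockwise sum of the edge weights `w` around the square with lower left corner `s`:
the discrete curl of `w`. -/
def circulation (w : ℤ × ℤ → ℤ × ℤ → M) (s : ℤ × ℤ) : M :=
  w s (s + (1, 0)) + w (s + (1, 0)) (s + (1, 0) + (0, 1))
    - w (s + (0, 1)) (s + (0, 1) + (1, 0)) - w s (s + (0, 1))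

theorem circulation_sub_potential (w : ℤ × ℤ → ℤ × ℤ → M) (P : ℤ × ℤ → M) (s : ℤ × ℤ) :
    circulation (fun a b => w a b - (P b - P a)) s = circulation w s := by
  simp only [circulation, add_right_comm s (1, 0)]
  abel

theorem sum_add_right_eq_sum {ι : Type*} [AddGroup ι] (Q : Finset ι) (e : ι) {f : ι → M}
    (hf : ∀ s, ¬(s ∈ Q ↔ s - e ∈ Q) → f s = 0) : ∑ s ∈ Q, f (s + e) = ∑ s ∈ Q, f s := by
  classical
  have hmem (s : ι) : s ∈ Q.map (addRightEmbedding e) ↔ s - e ∈ Q := by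
    simp [← eq_sub_iff_add_eq]
  calc ∑ s ∈ Q, f (s + e) = ∑ s ∈ Q.map (addRightEmbedding e), f s := by simp
    _ = ∑ s ∈ Q, f s := Finset.sum_congr_of_eq_on_inter
      (fun s hs hs' => hf s fun h => hs' (h.mpr ((hmem s).mp hs)))
      (fun s hs hs' => hf s fun h => hs' ((hmem s).mpr (h.mp hs))) fun _ _ _ => rfl

/-- The boundary of a union of lattice squares, given by the finite set `Q` of their lower left
corners: the edges that lie on exactly one square of `Q`. -/
def boundaryGraph (Q : Finset (ℤ × ℤ)) : SimpleGraph (ℤ × ℤ) :=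
  SimpleGraph.fromRel fun a b =>
    (b = a + (1, 0) ∧ ¬(a ∈ Q ↔ a - (0, 1) ∈ Q)) ∨ (b = a + (0, 1) ∧ ¬(a ∈ Q ↔ a - (1, 0) ∈ Q))

variable {Q : Finset (ℤ × ℤ)} {a b : ℤ × ℤ}

theorem boundaryGraph_adj_right (h : ¬(a ∈ Q ↔ a - (0, 1) ∈ Q)) :
    (boundaryGraph Q).Adj a (a + (1, 0)) :=
  (SimpleGraph.fromRel_adj _ _ _).mpr ⟨by simp, .inl (.inl ⟨rfl, h⟩)⟩

theorem boundaryGraph_adj_up (h : ¬(a ∈ Q ↔ a - (1, 0) ∈ Q)) :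
    (boundaryGraph Q).Adj a (a + (0, 1)) :=
  (SimpleGraph.fromRel_adj _ _ _).mpr ⟨by simp, .inl (.inr ⟨rfl, h⟩)⟩

theorem latticeAdj_of_boundaryGraph_adj (h : (boundaryGraph Q).Adj a b) : LatticeAdj a b := by
  rcases ((SimpleGraph.fromRel_adj _ _ _).mp h).2 with (⟨rfl, -⟩ | ⟨rfl, -⟩) | (⟨rfl, -⟩ | ⟨rfl, -⟩)
    <;> simp [LatticeAdj]

theorem sum_circulation_eq_zero {w : ℤ × ℤ → ℤ × ℤ → M}
    (hw : ∀ a b, (boundaryGraph Q).Adj a b → w a b = 0) : ∑ s ∈ Q, circulation w s = 0 := by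
  have hright := sum_add_right_eq_sum Q (0, 1) (f := fun s => w s (s + (1, 0)))
    fun s hs => hw _ _ (boundaryGraph_adj_right hs)
  have hup := sum_add_right_eq_sum Q (1, 0) (f := fun s => w s (s + (0, 1)))
    fun s hs => hw _ _ (boundaryGraph_adj_up hs)
  simp only [circulation, Finset.sum_sub_distrib, Finset.sum_add_distrib, hright, hup]
  abel

end Circulation

theorem circulation_logStep_eq_zero {s : ℤ × ℤ} (hs : s ≠ 0) : circulation logStep s = 0 := by
  have hside : 1 ≤ s.1 ∨ s.1 + 1 ≤ 0 ∨ 1 ≤ s.2 ∨ s.2 + 1 ≤ 0 := by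
    rw [Ne, Prod.ext_iff] at hs
    simp only [Prod.fst_zero, Prod.snd_zero] at hs
    omega
  obtain ⟨u, hu⟩ := exists_re_mul_latticePt_pos (S := Icc s (s + (1, 1))) <|
    hside.imp (fun h a ha => h.trans ha.1.1) <| .imp (fun h a ha => ha.2.1.trans h) <|
      .imp (fun h a ha => h.trans ha.1.2) (fun h a ha => ha.2.2.trans h)
  have hlog {a b : ℤ × ℤ} (ha : a ∈ Icc s (s + (1, 1))) (hb : b ∈ Icc s (s + (1, 1))) :
      logStep a b = Complex.log (u * latticePt b) - Complex.log (u * latticePt a) :=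
    log_div_of_re_mul_pos (hu a ha) (hu b hb)
  rw [circulation, hlog, hlog, hlog, hlog, add_right_comm s (1, 0)]
  · ring
  all_goals simp [Prod.le_def]

theorem circulation_logStep_zero : circulation logStep 0 = 2 * Real.pi * Complex.I := by
  have hquarter {a b : ℤ × ℤ} {z : ℂ} (h : latticePt b = z * latticePt a)
      (ha : latticePt a ≠ 0) : logStep a b = Complex.log z := by
    rw [logStep, h, mul_div_cancel_right₀ _ ha]
  have hne (a : ℤ × ℤ) : latticePt a ≠ 0 := by
    obtain ⟨u, hu⟩ := exists_re_mul_latticePt_pos (S := {a}) (by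
      simp only [mem_singleton_iff, forall_eq]
      omega)
    exact ne_zero_of_re_mul_pos (hu a rfl)
  rw [circulation, hquarter (z := Complex.I) _ (hne _), hquarter (z := Complex.I) _ (hne _),
    hquarter (z := -Complex.I) _ (hne _), hquarter (z := -Complex.I) _ (hne _), Complex.log_I,
    Complex.log_neg_I]
  · ring
  all_goals apply Complex.ext <;> norm_num [latticePt]

theorem exists_isCycle_walkWeight_logStep_ne_zero {Q : Finset (ℤ × ℤ)} (hQ : 0 ∈ Q) :
    ∃ (a : ℤ × ℤ) (p : (boundaryGraph Q).Walk a a), p.IsCycle ∧ walkWeight logStep p ≠ 0 := by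
  -- Otherwise `logStep` has a potential `P` along the boundary, and subtracting the gradient of `P`
  -- leaves the total circulation over the squares of `Q` unchanged but makes it vanish.
  by_contra! hcycle
  obtain ⟨P, hP⟩ := exists_potential
    (fun a b h => (latticeAdj_of_boundaryGraph_adj h).logStep_swap) hcycle
  have hsum : ∑ s ∈ Q, circulation logStep s = 0 := by
    simp only [← circulation_sub_potential logStep P]
    exact sum_circulation_eq_zero fun a b h => sub_eq_zero.mpr (hP a b h)
  rw [Finset.sum_eq_single_of_mem 0 hQ fun s _ hs => circulation_logStep_eq_zero hs,
    circulation_logStep_zero] at hsum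
  exact Complex.two_pi_I_ne_zero hsum

end Lattice

section Loops

open ContinuousMap

/-- The punctured plane `ℂ \ {0}`, which replaces the annulus as the ambient space of loops. -/
abbrev PuncturedPlane := {z : ℂ // z ≠ 0}

variable {X : Type*} [TopologicalSpace X]

theorem sub_eq_sub_of_exp_eq {S : Set X} (hS : IsPreconnected S) {g h : X → ℂ}
    (hg : ContinuousOn g S) (hh : ContinuousOn h S)
    (heq : ∀ x ∈ S, Complex.exp (g x) = Complex.exp (h x)) {x y : X} (hx : x ∈ S) (hy : y ∈ S) :
    g x - g y = h x - h y := by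
  have hone (z : X) (hz : z ∈ S) : Complex.exp (g z - h z) = 1 := by
    rw [Complex.exp_sub, heq z hz, div_self (Complex.exp_ne_zero _)]
  have hconst := Complex.isCoveringMap_exp.constOn_of_comp hS (hg.sub hh)
    (fun z hz z' hz' => Subtype.ext ((hone z hz).trans (hone z' hz').symm)) hx hy
  exact (sub_eq_sub_iff_sub_eq_sub).mpr hconst

theorem exists_log_of_nullhomotopic {φ : C(X, PuncturedPlane)} (hφ : φ.Nullhomotopic) :
    ∃ g : C(X, ℂ), ∀ x, Complex.exp (g x) = φ x := by
  obtain ⟨y, ⟨H⟩⟩ := hφ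
  have hstart (x : X) : H.symm (0, x) = (⟨_, (Complex.log y).exp_ne_zero⟩ : PuncturedPlane) := by
    simpa using (Subtype.ext (Complex.exp_log y.2)).symm
  let G := Complex.isCoveringMap_exp.liftHomotopy H.symm.toContinuousMap (.const X (Complex.log y))
    hstart
  refine ⟨G.comp ((const X 1).prodMk (ContinuousMap.id X)), fun x => ?_⟩
  have hlift := congrFun (Complex.isCoveringMap_exp.liftHomotopy_lifts H.symm.toContinuousMap
    (.const X (Complex.log y)) hstart) (1, x)
  simpa using congrArg Subtype.val hlift

/-- The map `u`, which misses `p`, as seen from `p`: the translate of `u` taking `p` to the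
puncture. -/
def viewFrom (u : C(X, ℂ)) (p : ℂ) (hp : p ∉ range u) : C(X, PuncturedPlane) where
  toFun x := ⟨u x - p, sub_ne_zero.mpr fun h => hp ⟨x, h⟩⟩
  continuous_toFun := by fun_prop

theorem viewFrom_homotopic_of_joinedIn {u : C(X, ℂ)} {p q : ℂ} (h : JoinedIn (range u)ᶜ p q) :
    (viewFrom u p h.source_mem).Homotopic (viewFrom u q h.target_mem) := by
  obtain ⟨γ, hγ⟩ := h
  exact ⟨{
    toFun := fun tx => ⟨u tx.2 - γ tx.1, sub_ne_zero.mpr fun h => hγ tx.1 ⟨tx.2, h⟩⟩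
    continuous_toFun := by fun_prop
    map_zero_left := fun x => by simp [viewFrom]
    map_one_left := fun x => by simp [viewFrom] }⟩

theorem viewFrom_nullhomotopic_of_norm_lt {u : C(X, ℂ)} {p : ℂ} (h : ∀ x, ‖u x‖ < ‖p‖)
    (hp : p ∉ range u) (hp0 : p ≠ 0) : (viewFrom u p hp).Nullhomotopic := by
  have hne (t : unitInterval) (x : X) : (t : ℝ) * u x ≠ p := fun heq => by
    have : ‖p‖ ≤ ‖u x‖ := by
      rw [← heq, norm_mul, Complex.norm_real, Real.norm_of_nonneg t.2.1]
      exact mul_le_of_le_one_left (norm_nonneg _) t.2.2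
    exact (h x).not_ge this
  refine ⟨⟨-p, neg_ne_zero.mpr hp0⟩, Homotopic.symm ⟨{
    toFun := fun tx => ⟨(tx.1 : ℝ) * u tx.2 - p, sub_ne_zero.mpr (hne _ _)⟩
    continuous_toFun := by fun_prop
    map_zero_left := fun x => by simp
    map_one_left := fun x => by simp [viewFrom] }⟩⟩

theorem isBounded_connectedComponentIn_compl_range [CompactSpace X] {φ : C(X, PuncturedPlane)}
    (hφ : ¬φ.Nullhomotopic) :
    Bornology.IsBounded (connectedComponentIn (range fun x => (φ x : ℂ))ᶜ 0) := by
  let u : C(X, ℂ) := ⟨fun x => φ x, by fun_prop⟩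
  have hu : IsClosed (range u) := (isCompact_range u.continuous).isClosed
  obtain ⟨R, hR0, hR⟩ := (isCompact_range u.continuous).isBounded.exists_pos_norm_le
  have h0 : (0 : ℂ) ∈ (range u)ᶜ := fun ⟨x, hx⟩ => (φ x).2 hx
  refine isBounded_iff_forall_norm_le.mpr ⟨R, fun p hp => ?_⟩
  by_contra! hlt
  have hpath := hu.isOpen_compl.connectedComponentIn.isConnected_iff_isPathConnected.mp
    (isConnected_connectedComponentIn_iff.mpr h0)
  have hjoin := (hpath.joinedIn 0 (mem_connectedComponentIn h0) p hp).mono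
    (connectedComponentIn_subset _ _)
  have hself : viewFrom u 0 h0 = φ := by ext x; simp [viewFrom, u]
  obtain ⟨y, hy⟩ := viewFrom_nullhomotopic_of_norm_lt (fun x => (hR _ ⟨x, rfl⟩).trans_lt hlt)
    hjoin.target_mem (norm_pos_iff.mp (hR0.trans hlt))
  exact hφ (hself ▸ ⟨y, (viewFrom_homotopic_of_joinedIn hjoin).trans hy⟩)

end Loops

section Polar

/-- Polar coordinates with logarithmic radius, identifying the annulus with the punctured plane;
the lower end of the annulus corresponds to the puncture. -/
def polar : Ann ≃ₜ PuncturedPlane :=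
  ((AddCircle.homeomorphCircle one_ne_zero).prodCongr Real.expOrderIso.toHomeomorph).trans
    (homeomorphUnitSphereProd ℂ).symm

theorem coe_polar (p : Ann) : (polar p : ℂ) = Real.exp p.2 * (AddCircle.toCircle p.1 : ℂ) := by
  rw [← AddCircle.homeomorphCircle_apply one_ne_zero]
  rfl

theorem norm_polar (p : Ann) : ‖(polar p : ℂ)‖ = Real.exp p.2 := by
  rw [coe_polar, norm_mul, Circle.norm_coe, mul_one, Complex.norm_real, Real.norm_of_nonneg
    (Real.exp_pos _).le]

theorem isEssentialCircle_horizontal (y : ℝ) : IsEssentialCircle {p : Ann | p.2 = y} := by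
  let φ : C(AddCircle (1 : ℝ), Ann) := ⟨fun x => (x, y), by fun_prop⟩
  refine ⟨φ, fun _ _ h => (Prod.ext_iff.mp h).1, ?_, fun hnull => ?_⟩
  · ext p; simp [φ, Prod.ext_iff, eq_comm]
  have hnull' := ContinuousMap.Nullhomotopic.comp_right (f := φ) hnull
    (polar : C(Ann, PuncturedPlane))
  obtain ⟨g, hg⟩ := exists_log_of_nullhomotopic hnull'
  have hexp (t : ℝ) : Complex.exp (g t) = Complex.exp (y + 2 * Real.pi * t * Complex.I) := by
    rw [hg]
    simp [φ, coe_polar, AddCircle.toCircle_apply_mk, Complex.exp_add]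
  have := sub_eq_sub_of_exp_eq isPreconnected_univ (g := fun t : ℝ => g t)
    (by fun_prop) (by fun_prop) (fun t _ => hexp t) (mem_univ 1) (mem_univ 0)
  simp [AddCircle.coe_period] at this

theorem comap_polar_nhds_zero : comap (fun p => (polar p : ℂ)) (𝓝 0) = comap Prod.snd atBot := by
  have hnorm : (norm ∘ fun p => (polar p : ℂ)) = Real.exp ∘ Prod.snd := funext norm_polar
  rw [← comap_norm_nhds_zero, comap_comap, hnorm, ← comap_comap, Real.comap_exp_nhds_zero]

/-- A simple closed curve in `ℂ` avoiding `0` and winding around it, as a set: the planar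
counterpart of `IsEssentialCircle`. -/
def IsEssentialCurve (κ : Set ℂ) : Prop :=
  ∃ φ : C(AddCircle (1 : ℝ), PuncturedPlane),
    Function.Injective φ ∧ range (fun x => (φ x : ℂ)) = κ ∧ ¬φ.Nullhomotopic

theorem IsEssentialCircle.image_polar {c : Set Ann} (hc : IsEssentialCircle c) :
    IsEssentialCurve ((fun p => (polar p : ℂ)) '' c) := by
  obtain ⟨φ, hinj, rfl, hφ⟩ := hc
  refine ⟨(polar : C(Ann, PuncturedPlane)).comp φ, polar.injective.comp hinj, ?_,
    fun hnull => hφ ?_⟩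
  · exact range_comp (fun p => (polar p : ℂ)) φ
  · change φ.Nullhomotopic
    convert! hnull.comp_right (polar.symm : C(PuncturedPlane, Ann))
    ext x <;> simp

theorem IsEssentialCurve.exists_image_polar {κ : Set ℂ} (hκ : IsEssentialCurve κ) :
    ∃ c, IsEssentialCircle c ∧ (fun p => (polar p : ℂ)) '' c = κ := by
  obtain ⟨φ, hinj, rfl, hφ⟩ := hκ
  let ψ : C(AddCircle (1 : ℝ), Ann) := (polar.symm : C(PuncturedPlane, Ann)).comp φ
  refine ⟨range ψ, ⟨ψ, polar.symm.injective.comp hinj, rfl, fun hnull => hφ ?_⟩, ?_⟩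
  · convert! ContinuousMap.Nullhomotopic.comp_right (f := ψ) hnull (polar : C(Ann, PuncturedPlane))
    ext x; simp [ψ]
  · rw [← range_comp]
    simp [ψ, Function.comp_def]

theorem intersectionProperty_iff_of_semiconj {f : Ann → Ann} {F : ℂ → ℂ}
    (hF : ∀ p, F (polar p) = polar (f p)) :
    IntersectionProperty f ↔ ∀ κ, IsEssentialCurve κ → (κ ∩ F '' κ).Nonempty := by
  have himage (c : Set Ann) : ((fun p => (polar p : ℂ)) '' c ∩ F '' ((fun p => (polar p : ℂ)) '' c))
      = (fun p => (polar p : ℂ)) '' (c ∩ f '' c) := by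
    have hinj : Function.Injective fun p => (polar p : ℂ) :=
      Subtype.val_injective.comp polar.injective
    rw [image_inter hinj, image_image, image_image]
    simp only [hF]
  refine ⟨fun h κ hκ => ?_, fun h c hc => ?_⟩
  · obtain ⟨c, hc, rfl⟩ := hκ.exists_image_polar
    exact himage c ▸ (h c hc).image _
  · exact image_nonempty.mp (himage c ▸ h _ hc.image_polar)

end Polar

section Ends

theorem IntersectionProperty.symm {f : Ann ≃ₜ Ann} (hf : IntersectionProperty f) :
    IntersectionProperty f.symm := fun c hc => by
  obtain ⟨_, hx, x, hx', rfl⟩ := hf c hc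
  exact ⟨x, hx', f x, hx, f.symm_apply_apply x⟩

theorem IntersectionProperty.tendsto_lowerEnd {f : Ann ≃ₜ Ann} (hf : IntersectionProperty f) :
    Tendsto f (comap Prod.snd atBot) (comap Prod.snd atBot) := by
  refine tendsto_comap_iff.mpr (tendsto_atBot.mpr fun M => ?_)
  obtain ⟨N, hN⟩ : BddBelow (Prod.snd '' (f ⁻¹' (univ ×ˢ {M}))) :=
    ((f.isCompact_preimage.mpr (isCompact_univ.prod isCompact_singleton)).image
      continuous_snd).bddBelow
  have hpre : IsPreconnected ((fun p => (f p).2) '' (univ ×ˢ Iio (min N M))) :=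
    (isPreconnected_univ.prod isPreconnected_Iio).image _ (by fun_prop)
  have hM : M ∉ (fun p => (f p).2) '' (univ ×ˢ Iio (min N M)) := by
    rintro ⟨p, hp, hpM⟩
    exact (lt_min_iff.mp hp.2).1.not_ge (hN ⟨p, ⟨trivial, hpM⟩, rfl⟩)
  refine mem_of_superset (preimage_mem_comap (Iio_mem_atBot (min N M))) fun p hp => ?_
  by_contra! hlt
  obtain ⟨y, hy⟩ := exists_lt (min N M)
  obtain ⟨_, hfq, q, rfl, rfl⟩ := hf _ (isEssentialCircle_horizontal y)
  have hfqM : (f q).2 ≤ M := hfq.le.trans (hy.le.trans (min_le_right _ _))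
  exact hM (hpre.Icc_subset ⟨q, ⟨trivial, hy⟩, rfl⟩ ⟨p, ⟨trivial, hp⟩, rfl⟩
    ⟨hfqM, (not_le.mp hlt).le⟩)

open Classical in
theorem continuous_ofSubtype_of_tendsto {X : Type*} [TopologicalSpace X] [T1Space X] {x : X}
    (g : {z // z ≠ x} ≃ₜ {z // z ≠ x})
    (hg : Tendsto (fun z => (g z : X)) (comap Subtype.val (𝓝 x)) (𝓝 x)) :
    Continuous (Equiv.Perm.ofSubtype g.toEquiv) := by
  have hval : Equiv.Perm.ofSubtype g.toEquiv ∘ Subtype.val = fun w => (g w : X) :=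
    funext fun w => Equiv.Perm.ofSubtype_apply_coe _ w
  refine continuous_iff_continuousAt.mpr fun z => ?_
  rcases eq_or_ne z x with rfl | hz
  · rw [continuousAt_iff_punctured_nhds, Equiv.Perm.ofSubtype_apply_of_not_mem _ (by simp),
      nhdsWithin, compl_def, ← subtype_coe_map_comap, tendsto_map'_iff]
    exact hg.congr fun w => (congrFun hval w).symm
  · have hopen : IsOpenEmbedding (Subtype.val : {z // z ≠ x} → X) :=
      isOpen_compl_singleton.isOpenEmbedding_subtypeVal
    refine (hopen.continuousAt_iff (x := ⟨z, hz⟩)).mp ?_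
    rw [hval]
    fun_prop

theorem exists_homeomorph_extend_of_tendsto {X : Type*} [TopologicalSpace X] [T1Space X] {x : X}
    (g : {z // z ≠ x} ≃ₜ {z // z ≠ x})
    (hg : Tendsto (fun z => (g z : X)) (comap Subtype.val (𝓝 x)) (𝓝 x))
    (hg' : Tendsto (fun z => (g.symm z : X)) (comap Subtype.val (𝓝 x)) (𝓝 x)) :
    ∃ F : X ≃ₜ X, F x = x ∧ ∀ z : {z // z ≠ x}, F z = g z := by
  classical
  let F : X ≃ₜ X :=
    { Equiv.Perm.ofSubtype g.toEquiv with
      continuous_toFun := continuous_ofSubtype_of_tendsto g hg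
      continuous_invFun := by
        have hinv := continuous_ofSubtype_of_tendsto g.symm hg'
        rwa [show g.symm.toEquiv = (g.toEquiv : Equiv.Perm _)⁻¹ from rfl, map_inv] at hinv }
  exact ⟨F, Equiv.Perm.ofSubtype_apply_of_not_mem _ (by simp),
    fun z => Equiv.Perm.ofSubtype_apply_coe _ z⟩

theorem IntersectionProperty.exists_planar_extension {f : Ann ≃ₜ Ann}
    (hf : IntersectionProperty f) :
    ∃ F : ℂ ≃ₜ ℂ, F 0 = 0 ∧ ∀ p, F (polar p) = polar (f p) := by
  have hend (h : Ann ≃ₜ Ann) (hh : Tendsto h (comap Prod.snd atBot) (comap Prod.snd atBot)) :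
      Tendsto (fun z => (((polar.symm.trans h).trans polar) z : ℂ)) (comap Subtype.val (𝓝 0))
        (𝓝 0) := by
    have hmap : comap Subtype.val (𝓝 0) = map polar (comap (fun p => (polar p : ℂ)) (𝓝 0)) := by
      rw [← map_comap_of_surjective polar.surjective (comap _ _), comap_comap]
      rfl
    rw [← comap_polar_nhds_zero, tendsto_comap_iff] at hh
    rw [hmap, tendsto_map'_iff]
    simpa [Function.comp_def] using hh
  obtain ⟨F, hF0, hF⟩ := exists_homeomorph_extend_of_tendsto ((polar.symm.trans f).trans polar)
    (hend f hf.tendsto_lowerEnd) (hend f.symm hf.symm.tendsto_lowerEnd)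
  exact ⟨F, hF0, fun p => by simp [hF]⟩

end Ends

section Polygon

section PolygonalPath

variable {E : Type*} [NormedAddCommGroup E] [NormedSpace ℝ E] {n : ℕ} (P : ZMod n → E)

/-- The path that runs along the closed polygon with cyclically ordered vertices `P`, reaching the
vertex `P k` at time `k`. -/
def polygonalPath (u : ℝ) : E :=
  AffineMap.lineMap (P ⌊u⌋) (P (⌊u⌋ + 1)) (Int.fract u)

theorem polygonalPath_eq_lineMap {k : ℤ} {u : ℝ} (hu : u ∈ Icc (k : ℝ) (k + 1)) :
    polygonalPath P u = AffineMap.lineMap (P k) (P (k + 1)) (u - k) := by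
  rcases hu.2.lt_or_eq with hlt | rfl
  · rw [polygonalPath, Int.fract, Int.floor_eq_iff.mpr ⟨hu.1, hlt⟩]
  · simp [polygonalPath]

theorem continuous_polygonalPath : Continuous (polygonalPath P) := by
  have hedge (k : ℤ) : ContinuousOn (polygonalPath P) (Icc k (k + 1)) :=
    ContinuousOn.congr (by fun_prop) fun u hu => polygonalPath_eq_lineMap P hu
  refine continuous_iff_continuousAt.mpr fun u =>
    continuousAt_iff_continuous_left_right.mpr ⟨?_, ?_⟩
  · have hu : u ∈ Ioc ((⌈u⌉ - 1 : ℤ) : ℝ) ((⌈u⌉ - 1 : ℤ) + 1) := by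
      push_cast
      exact ⟨by linarith [Int.ceil_lt_add_one u], by linarith [Int.le_ceil u]⟩
    exact (hedge _ u (Ioc_subset_Icc_self hu)).mono_of_mem_nhdsWithin (Icc_mem_nhdsLE_of_mem hu)
  · have hu : u ∈ Ico (⌊u⌋ : ℝ) (⌊u⌋ + 1) := ⟨Int.floor_le u, Int.lt_floor_add_one u⟩
    exact (hedge _ u (Ico_subset_Icc_self hu)).mono_of_mem_nhdsWithin (Icc_mem_nhdsGE_of_mem hu)

theorem periodic_polygonalPath : Function.Periodic (fun t : ℝ => polygonalPath P (n * t)) 1 :=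
  fun t => by simp [polygonalPath, mul_add]

/-- The closed polygon with cyclically ordered vertices `P`, as a loop. -/
def closedPolygon : C(AddCircle (1 : ℝ), E) where
  toFun := (periodic_polygonalPath P).lift
  continuous_toFun :=
    ((continuous_polygonalPath P).comp (by fun_prop)).quotient_lift _

theorem closedPolygon_coe (t : ℝ) : closedPolygon P t = polygonalPath P (n * t) :=
  rfl

theorem closedPolygon_mem_edge (x : AddCircle (1 : ℝ)) :
    ∃ i, closedPolygon P x ∈ segment ℝ (P i) (P (i + 1)) := by
  obtain ⟨t, rfl⟩ := QuotientAddGroup.mk_surjective x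
  refine ⟨⌊n * t⌋, ?_⟩
  rw [segment_eq_image_lineMap]
  exact ⟨_, ⟨Int.fract_nonneg _, (Int.fract_lt_one _).le⟩, rfl⟩

end PolygonalPath

theorem log_sub_log_of_exp_eq_lineMap {a b u : ℂ} (ha : 0 < (u * a).re) (hb : 0 < (u * b).re)
    {g : ℝ → ℂ} {k : ℝ} (hg : ContinuousOn g (Icc k (k + 1)))
    (hexp : ∀ s ∈ Icc k (k + 1), Complex.exp (g s) = AffineMap.lineMap a b (s - k)) :
    g (k + 1) - g k = Complex.log (b / a) := by
  have hre (s : ℝ) (hs : s ∈ Icc k (k + 1)) : 0 < (u * AffineMap.lineMap a b (s - k)).re :=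
    re_mul_lineMap_pos ha hb ⟨sub_nonneg.mpr hs.1, sub_le_iff_le_add'.mpr hs.2⟩
  have hu : u ≠ 0 := ne_zero_of_re_mul_pos (u := a) (by rwa [mul_comm])
  have hlog : ContinuousOn
      (fun s => Complex.log (u * AffineMap.lineMap a b (s - k)) - Complex.log u) (Icc k (k + 1)) :=
    (ContinuousOn.clog (by fun_prop) fun s hs => .inl (hre s hs)).sub continuousOn_const
  have hle : k ≤ k + 1 := by linarith
  have hsub := sub_eq_sub_of_exp_eq isPreconnected_Icc hg hlog (fun s hs => by
    rw [hexp s hs, Complex.exp_sub, Complex.exp_log hu,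
      Complex.exp_log (mul_ne_zero hu (ne_zero_of_re_mul_pos (hre s hs))),
      mul_div_cancel_left₀ _ hu])
    (right_mem_Icc.mpr hle) (left_mem_Icc.mpr hle)
  rw [hsub, log_div_of_re_mul_pos ha hb]
  simp

theorem closedPolygon_not_nullhomotopic {n : ℕ} [NeZero n] {P : ZMod n → ℂ}
    (hP : ∀ i, ∃ u : ℂ, 0 < (u * P i).re ∧ 0 < (u * P (i + 1)).re)
    (hsum : ∑ k ∈ Finset.range n, Complex.log (P (k + 1) / P k) ≠ 0)
    {φ : C(AddCircle (1 : ℝ), PuncturedPlane)} (hφ : ∀ x, (φ x : ℂ) = closedPolygon P x) :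
    ¬φ.Nullhomotopic := by
  intro hnull
  obtain ⟨g, hg⟩ := exists_log_of_nullhomotopic hnull
  have hn : (n : ℝ) ≠ 0 := NeZero.ne _
  let G (u : ℝ) : ℂ := g (u / n : ℝ)
  have hexp (u : ℝ) : Complex.exp (G u) = polygonalPath P u := by
    rw [hg, hφ, closedPolygon_coe, mul_div_cancel₀ _ hn]
  have hstep (k : ℕ) : Complex.log (P (k + 1) / P k) = G ((k + 1 : ℕ) : ℝ) - G (k : ℝ) := by
    obtain ⟨u, hu, hu'⟩ := hP k
    rw [Nat.cast_add_one, log_sub_log_of_exp_eq_lineMap hu hu' (by fun_prop)]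
    intro s hs
    simpa using (hexp s).trans (polygonalPath_eq_lineMap P (k := k) (by simpa using hs))
  refine hsum ?_
  rw [Finset.sum_congr rfl fun k _ => hstep k, Finset.sum_range_sub fun k : ℕ => G k]
  simp [G, AddCircle.coe_period]

end Polygon

section LatticePolygon

variable {a b c d : ℤ × ℤ}

theorem LatticeAdj.ne (h : LatticeAdj a b) : a ≠ b := by
  rintro rfl
  simp [LatticeAdj] at h

theorem LatticeAdj.dist_eq_one (h : LatticeAdj a b) : dist (latticePt a) (latticePt b) = 1 := by
  have hsq : ((a.1 : ℝ) - b.1) ^ 2 + (a.2 - b.2) ^ 2 = 1 := by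
    have hint : (a.1 - b.1) ^ 2 + (a.2 - b.2) ^ 2 = 1 := by
      have : (b.1 - a.1 = 0 ∧ (b.2 - a.2 = 1 ∨ b.2 - a.2 = -1)) ∨
          ((b.1 - a.1 = 1 ∨ b.1 - a.1 = -1) ∧ b.2 - a.2 = 0) := by
        unfold LatticeAdj at h
        omega
      grind
    exact_mod_cast hint
  simp [Complex.dist_eq_re_im, latticePt, hsq]

theorem int_eq_or_eq_of_abs_lt_one {m n k : ℤ} {s : ℝ} (hs : s ∈ Icc (0 : ℝ) 1)
    (hmn : (n - m).natAbs ≤ 1) (hk : |m + s * (n - m) - k| < 1) : k = m ∨ k = n := by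
  obtain ⟨hlower, hupper⟩ := abs_lt.mp hk
  have hmem : (m + s * (n - m) : ℝ) ∈ segment ℝ (m : ℝ) n := by
    rw [segment_eq_image']
    exact ⟨s, hs, rfl⟩
  rw [segment_eq_uIcc] at hmem
  have hmin : min m n < k + 1 := by
    rify
    linarith [hmem.1]
  have hmax : k - 1 < max m n := by
    rify
    linarith [hmem.2]
  omega

theorem LatticeAdj.eq_or_eq_of_dist_lineMap_lt_one (h : LatticeAdj a b) {s : ℝ}
    (hs : s ∈ Icc (0 : ℝ) 1)
    (hc : dist (AffineMap.lineMap (latticePt a) (latticePt b) s) (latticePt c) < 1) :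
    c = a ∨ c = b := by
  rw [dist_eq_norm] at hc
  have hre : |a.1 + s * (b.1 - a.1) - c.1| < 1 := by
    refine lt_of_eq_of_lt (congrArg _ ?_) ((Complex.abs_re_le_norm _).trans_lt hc)
    simp only [latticePt, AffineMap.lineMap_apply, vsub_eq_sub, Complex.real_smul, vadd_eq_add,
      Complex.sub_re, Complex.add_re, Complex.re_ofReal_mul]
    ring
  have him : |a.2 + s * (b.2 - a.2) - c.2| < 1 := by
    refine lt_of_eq_of_lt (congrArg _ ?_) ((Complex.abs_im_le_norm _).trans_lt hc)
    simp only [latticePt, AffineMap.lineMap_apply, vsub_eq_sub, Complex.real_smul, vadd_eq_add,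
      Complex.sub_im, Complex.add_im, Complex.im_ofReal_mul]
    ring
  unfold LatticeAdj at h
  have := int_eq_or_eq_of_abs_lt_one hs (by omega) hre
  have := int_eq_or_eq_of_abs_lt_one hs (by omega) him
  simp only [Prod.ext_iff]
  omega

theorem LatticeAdj.eq_or_swap_of_lineMap_eq (hab : LatticeAdj a b) (hcd : LatticeAdj c d)
    {s t : ℝ} (hs : s ∈ Ico (0 : ℝ) 1) (ht : t ∈ Ico (0 : ℝ) 1)
    (hst : AffineMap.lineMap (latticePt a) (latticePt b) s =
      AffineMap.lineMap (latticePt c) (latticePt d) t) :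
    (a = c ∧ s = t) ∨ (a = d ∧ b = c) := by
  have hs' : dist (AffineMap.lineMap (latticePt a) (latticePt b) s) (latticePt a) = s := by
    rw [dist_lineMap_left, hab.dist_eq_one, mul_one, Real.norm_of_nonneg hs.1]
  have ht' : dist (AffineMap.lineMap (latticePt c) (latticePt d) t) (latticePt c) = t := by
    rw [dist_lineMap_left, hcd.dist_eq_one, mul_one, Real.norm_of_nonneg ht.1]
  rcases hab.eq_or_eq_of_dist_lineMap_lt_one (Ico_subset_Icc_self hs) (c := c)
    (by rw [hst, ht']; exact ht.2) with rfl | rfl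
  · exact .inl ⟨rfl, by rw [← hs', hst, ht']⟩
  rcases hcd.eq_or_eq_of_dist_lineMap_lt_one (Ico_subset_Icc_self ht) (c := a)
    (by rw [← hst, hs']; exact hs.2) with h | h
  · exact absurd h hab.ne
  · exact .inr ⟨h, rfl⟩

theorem closedPolygon_latticePt_injective {n : ℕ} (hn : 3 ≤ n) {v : ZMod n → ℤ × ℤ}
    (hv : Function.Injective v) (hadj : ∀ i, LatticeAdj (v i) (v (i + 1))) :
    Function.Injective (closedPolygon fun i => latticePt (v i)) := by
  have hn' : (n : ℝ) ≠ 0 := by positivity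
  intro x y hxy
  obtain ⟨t, rfl⟩ := QuotientAddGroup.mk_surjective x
  obtain ⟨t', rfl⟩ := QuotientAddGroup.mk_surjective y
  rcases (hadj _).eq_or_swap_of_lineMap_eq (hadj _) ⟨Int.fract_nonneg _, Int.fract_lt_one _⟩
    ⟨Int.fract_nonneg _, Int.fract_lt_one _⟩ hxy with ⟨hfloor, hfract⟩ | ⟨h, h'⟩
  · obtain ⟨m, hm⟩ := (ZMod.intCast_eq_intCast_iff_dvd_sub _ _ n).mp (hv hfloor)
    refine (sub_eq_zero.mp ((AddCircle.coe_eq_zero_iff 1).mpr ⟨m, ?_⟩)).symm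
    have hm' : (⌊n * t'⌋ - ⌊n * t⌋ : ℝ) = n * m := by exact_mod_cast hm
    refine mul_left_cancel₀ hn' ?_
    rw [zsmul_one, ← hm']
    unfold Int.fract at hfract
    linear_combination hfract
  · have htwo : ((2 : ℕ) : ZMod n) = 0 := by
      push_cast
      linear_combination hv h' - hv h
    have := Nat.le_of_dvd two_pos ((ZMod.natCast_eq_zero_iff 2 n).mp htwo)
    omega

theorem isEssentialCurve_range_closedPolygon {n : ℕ} (hn : 3 ≤ n) {v : ZMod n → ℤ × ℤ}
    (hv : Function.Injective v) (hadj : ∀ i, LatticeAdj (v i) (v (i + 1)))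
    (hsum : ∑ k ∈ Finset.range n, logStep (v k) (v (k + 1)) ≠ 0) :
    IsEssentialCurve (range (closedPolygon fun i => latticePt (v i))) := by
  have hne (x : AddCircle (1 : ℝ)) : closedPolygon (fun i => latticePt (v i)) x ≠ 0 := by
    obtain ⟨i, hi⟩ := closedPolygon_mem_edge (fun i => latticePt (v i)) x
    obtain ⟨u, hu, hu'⟩ := (hadj i).exists_re_mul_pos
    rw [segment_eq_image_lineMap] at hi
    obtain ⟨s, hs, hsx⟩ := hi
    rw [← hsx]
    exact ne_zero_of_re_mul_pos (re_mul_lineMap_pos hu hu' hs)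
  have : NeZero n := ⟨by omega⟩
  refine ⟨⟨fun x => ⟨_, hne x⟩, by fun_prop⟩, fun x y hxy => ?_, rfl, ?_⟩
  · exact closedPolygon_latticePt_injective hn hv hadj (Subtype.ext_iff.mp hxy)
  · exact closedPolygon_not_nullhomotopic (fun i => (hadj i).exists_re_mul_pos) hsum fun _ => rfl

end LatticePolygon

section Separation

variable {Q : Finset (ℤ × ℤ)}

theorem exists_isEssentialCurve_subset_boundaryGraph (hQ : 0 ∈ Q) :
    ∃ κ, IsEssentialCurve κ ∧
      ∀ z ∈ κ, ∃ a b, (boundaryGraph Q).Adj a b ∧ z ∈ segment ℝ (latticePt a) (latticePt b) := by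
  obtain ⟨a, p, hp, hweight⟩ := exists_isCycle_walkWeight_logStep_ne_zero hQ
  obtain ⟨v, hv, hvp⟩ := exists_zmod_enumeration_of_isCycle hp
  have hlen := hp.three_le_length
  have : NeZero p.length := ⟨by omega⟩
  have hvp' (k : ℕ) (hk : k < p.length) : v (k + 1) = p.getVert (k + 1) := by
    rw [← hvp _ hk, Nat.cast_add_one]
  have hadj (i : ZMod p.length) : (boundaryGraph Q).Adj (v i) (v (i + 1)) := by
    rw [← ZMod.natCast_zmod_val i, hvp _ i.val_lt.le, hvp' _ i.val_lt]
    exact p.adj_getVert_succ i.val_lt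
  refine ⟨_, isEssentialCurve_range_closedPolygon hlen hv
    (fun i => latticeAdj_of_boundaryGraph_adj (hadj i)) ?_, ?_⟩
  · rw [walkWeight_eq_sum_getVert] at hweight
    convert! hweight using 2 with k hk
    rw [hvp _ (Finset.mem_range.mp hk).le, hvp' _ (Finset.mem_range.mp hk)]
  · rintro _ ⟨x, rfl⟩
    obtain ⟨i, hi⟩ := closedPolygon_mem_edge (fun i => latticePt (v i)) x
    exact ⟨_, _, hadj i, hi⟩

/-- The closed unit square centred at the Gaussian integer `s.1 + s.2 * I`. -/
def latticeSquare (s : ℤ × ℤ) : Set ℂ :=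
  Icc (s.1 - 1 / 2 : ℝ) (s.1 + 1 / 2) ×ℂ Icc (s.2 - 1 / 2 : ℝ) (s.2 + 1 / 2)

theorem dist_le_two_of_mem_latticeSquare {s : ℤ × ℤ} {z w : ℂ} (hz : z ∈ latticeSquare s)
    (hw : w ∈ latticeSquare s) : dist z w ≤ 2 := by
  have hre := Real.dist_le_of_mem_Icc hz.1 hw.1
  have him := Real.dist_le_of_mem_Icc hz.2 hw.2
  rw [Real.dist_eq] at hre him
  rw [dist_eq_norm]
  refine (Complex.norm_le_abs_re_add_abs_im _).trans ?_
  rw [Complex.sub_re, Complex.sub_im]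
  linarith

theorem segment_latticePt_subset_latticeSquare {a b s : ℤ × ℤ} (ha : a ∈ Icc s (s + (1, 1)))
    (hb : b ∈ Icc s (s + (1, 1))) :
    segment ℝ (latticePt a) (latticePt b) ⊆ latticeSquare s := by
  have hcorner {a : ℤ × ℤ} (ha : a ∈ Icc s (s + (1, 1))) : latticePt a ∈ latticeSquare s := by
    obtain ⟨⟨h₁, h₂⟩, h₃, h₄⟩ := ha
    simp only [Prod.fst_add, Prod.snd_add] at h₃ h₄
    rify at h₁ h₂ h₃ h₄
    simp only [latticeSquare, latticePt, Complex.mem_reProdIm, mem_Icc]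
    refine ⟨⟨?_, ?_⟩, ?_, ?_⟩ <;> linarith
  have hconv : Convex ℝ (latticeSquare s) :=
    ((convex_Icc _ _).linear_preimage Complex.reLm).inter
      ((convex_Icc _ _).linear_preimage Complex.imLm)
  exact hconv.segment_subset (hcorner ha) (hcorner hb)

theorem finite_setOf_latticeSquare_inter_nonempty {K : Set ℂ} (hK : Bornology.IsBounded K) :
    {s | (latticeSquare s ∩ K).Nonempty}.Finite := by
  obtain ⟨R, hR⟩ := hK.exists_norm_le
  let N : ℤ := ⌈R + 1 / 2⌉
  refine (finite_Icc ((-N, -N) : ℤ × ℤ) (N, N)).subset ?_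
  rintro s ⟨z, ⟨hre, him⟩, hz⟩
  have hN : R + 1 / 2 ≤ N := Int.le_ceil _
  have hre' := abs_le.mp ((Complex.abs_re_le_norm z).trans (hR z hz))
  have him' := abs_le.mp ((Complex.abs_im_le_norm z).trans (hR z hz))
  simp only [mem_preimage, mem_Icc] at hre him
  simp only [mem_Icc, Prod.le_def]
  rify
  refine ⟨⟨?_, ?_⟩, ?_, ?_⟩ <;> linarith

theorem segment_subset_latticeSquare_of_boundaryGraph_adj {a b : ℤ × ℤ}
    (h : (boundaryGraph Q).Adj a b) :
    ∃ s ∈ Q, ∃ t ∉ Q,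
      segment ℝ (latticePt a) (latticePt b) ⊆ latticeSquare s ∩ latticeSquare t := by
  wlog hab : (b = a + (1, 0) ∧ ¬(a ∈ Q ↔ a - (0, 1) ∈ Q)) ∨
    (b = a + (0, 1) ∧ ¬(a ∈ Q ↔ a - (1, 0) ∈ Q)) generalizing a b
  · rw [segment_symm]
    exact this h.symm (((SimpleGraph.fromRel_adj _ _ _).mp h).2.resolve_left hab)
  obtain ⟨e, hmem, hsub⟩ : ∃ e, ¬(a ∈ Q ↔ a - e ∈ Q) ∧
      segment ℝ (latticePt a) (latticePt b) ⊆ latticeSquare a ∩ latticeSquare (a - e) := by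
    rcases hab with ⟨rfl, hmem⟩ | ⟨rfl, hmem⟩
    all_goals
      refine ⟨_, hmem, subset_inter ?_ ?_⟩ <;>
        apply segment_latticePt_subset_latticeSquare <;> simp [Prod.le_def]
  by_cases ha : a ∈ Q
  · exact ⟨a, ha, _, by tauto, hsub⟩
  · exact ⟨_, by tauto, a, ha, inter_comm _ _ ▸ hsub⟩

theorem exists_isEssentialCurve_of_dist_le_two {K V : Set ℂ} (hK : Bornology.IsBounded K)
    (hK0 : 0 ∈ K) (hV : ∀ z ∈ K, ∀ w, dist w z ≤ 2 → w ∈ V) :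
    ∃ κ, IsEssentialCurve κ ∧ κ ⊆ V \ K := by
  let Q := (finite_setOf_latticeSquare_inter_nonempty hK).toFinset
  obtain ⟨κ, hκ, hκQ⟩ := exists_isEssentialCurve_subset_boundaryGraph (Q := Q)
    ((Finite.mem_toFinset _).mpr ⟨0, by norm_num [latticeSquare, Complex.mem_reProdIm], hK0⟩)
  refine ⟨κ, hκ, fun w hw => ?_⟩
  obtain ⟨a, b, hab, hwab⟩ := hκQ w hw
  obtain ⟨s, hs, t, ht, hst⟩ := segment_subset_latticeSquare_of_boundaryGraph_adj hab
  obtain ⟨hws, hwt⟩ := hst hwab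
  obtain ⟨z, hzs, hz⟩ := (Finite.mem_toFinset _).mp hs
  exact ⟨hV z hz w (dist_le_two_of_mem_latticeSquare hws hzs),
    fun hwK => ht ((Finite.mem_toFinset _).mpr ⟨w, hwt, hwK⟩)⟩

theorem IsEssentialCurve.image_mul {κ : Set ℂ} (hκ : IsEssentialCurve κ) {c : ℂ} (hc : c ≠ 0) :
    IsEssentialCurve ((c * ·) '' κ) := by
  obtain ⟨φ, hinj, rfl, hφ⟩ := hκ
  let m : PuncturedPlane ≃ₜ PuncturedPlane :=
    (Homeomorph.mulLeft₀ c hc).subtype fun z => by simp [hc]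
  refine ⟨(m : C(PuncturedPlane, PuncturedPlane)).comp φ, m.injective.comp hinj, ?_,
    fun hnull => hφ ?_⟩
  · exact range_comp (c * ·) fun x => (φ x : ℂ)
  · convert! hnull.comp_right (m.symm : C(PuncturedPlane, PuncturedPlane))
    exact ContinuousMap.ext fun x => (m.symm_apply_apply (φ x)).symm

theorem exists_isEssentialCurve_subset_diff {K V : Set ℂ} (hK : IsCompact K) (hV : IsOpen V)
    (hKV : K ⊆ V) (hK0 : 0 ∈ K) : ∃ κ, IsEssentialCurve κ ∧ κ ⊆ V \ K := by
  obtain ⟨r, hr, hrV⟩ := hK.exists_cthickening_subset_open hV hKV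
  let c : ℂ := (r / 2 : ℝ)
  have hc : c ≠ 0 := Complex.ofReal_ne_zero.mpr (by positivity)
  have hthick (z : ℂ) (hz : c * z ∈ K) (w : ℂ) (hwz : dist w z ≤ 2) : c * w ∈ V := by
    refine hrV (Metric.mem_cthickening_of_dist_le _ _ _ _ hz ?_)
    rw [← smul_eq_mul, ← smul_eq_mul, dist_smul₀, Complex.norm_real,
      Real.norm_of_nonneg (by positivity)]
    linarith [mul_le_mul_of_nonneg_left hwz (half_pos hr).le]
  obtain ⟨κ, hκ, hκV⟩ := exists_isEssentialCurve_of_dist_le_two (K := (c * ·) ⁻¹' K)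
    (V := (c * ·) ⁻¹' V) ((Homeomorph.mulLeft₀ c hc).isCompact_preimage.mpr hK).isBounded
    (by simpa) hthick
  exact ⟨_, hκ.image_mul hc, image_subset_iff.mpr hκV⟩

end Separation

section Components

variable {X : Type*} [TopologicalSpace X] [LocallyConnectedSpace X] {d e : Set X} {x : X}

theorem closure_connectedComponentIn_compl_subset (hd : IsClosed d) (x : X) :
    closure (connectedComponentIn dᶜ x) ⊆ connectedComponentIn dᶜ x ∪ d := by
  intro y hy
  by_contra! h
  obtain ⟨hyC, hyd⟩ := not_or.mp h
  obtain ⟨z, hzy, hzx⟩ := mem_closure_iff.mp hy _ hd.isOpen_compl.connectedComponentIn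
    (mem_connectedComponentIn hyd)
  rw [connectedComponentIn_eq hzx, ← connectedComponentIn_eq hzy] at hyC
  exact hyC (mem_connectedComponentIn hyd)

theorem closure_connectedComponentIn_compl_subset_of_disjoint (he : IsClosed e)
    (hde : Disjoint d e) (hx : x ∉ e) (hd : Disjoint (connectedComponentIn eᶜ x) d) :
    closure (connectedComponentIn eᶜ x) ⊆ connectedComponentIn dᶜ x := by
  refine isPreconnected_connectedComponentIn.closure.subset_connectedComponentIn
    (subset_closure (mem_connectedComponentIn hx)) ?_
  refine (closure_connectedComponentIn_compl_subset he x).trans ?_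
  exact subset_compl_iff_disjoint_right.mpr (hd.union_left hde.symm)

theorem closure_connectedComponentIn_compl_subset_or_subset_or_union_eq_univ [PreconnectedSpace X]
    (hd : IsClosed d) (he : IsClosed e) (hd' : IsPreconnected d) (he' : IsPreconnected e)
    (hde : Disjoint d e) (hxd : x ∉ d) (hxe : x ∉ e) :
    closure (connectedComponentIn eᶜ x) ⊆ connectedComponentIn dᶜ x ∨
      closure (connectedComponentIn dᶜ x) ⊆ connectedComponentIn eᶜ x ∨
      connectedComponentIn dᶜ x ∪ connectedComponentIn eᶜ x = univ := by
  set C := connectedComponentIn dᶜ x with hC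
  set D := connectedComponentIn eᶜ x with hD
  by_cases hDd : Disjoint D d
  · exact .inl (closure_connectedComponentIn_compl_subset_of_disjoint he hde hxe hDd)
  by_cases hCe : Disjoint C e
  · exact .inr (.inl
      (closure_connectedComponentIn_compl_subset_of_disjoint hd hde.symm hxd hCe))
  obtain ⟨y, hyD, hyd⟩ := not_disjoint_iff.mp hDd
  obtain ⟨z, hzC, hze⟩ := not_disjoint_iff.mp hCe
  have hdD : d ⊆ D := by
    rw [hD, connectedComponentIn_eq hyD]
    exact hd'.subset_connectedComponentIn hyd hde.subset_compl_right
  have heC : e ⊆ C := by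
    rw [hC, connectedComponentIn_eq hzC]
    exact he'.subset_connectedComponentIn hze hde.subset_compl_left
  refine .inr (.inr (IsClopen.eq_univ ⟨?_, ?_⟩ ⟨x, .inl (mem_connectedComponentIn hxd)⟩))
  · refine isClosed_of_closure_subset ?_
    rw [closure_union]
    exact union_subset
      ((closure_connectedComponentIn_compl_subset hd x).trans (union_subset_union_right _ hdD))
      ((closure_connectedComponentIn_compl_subset he x).trans
        (union_subset subset_union_right (heC.trans subset_union_left)))
  · exact hd.isOpen_compl.connectedComponentIn.union he.isOpen_compl.connectedComponentIn

end Components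

section Trapping

theorem exists_isOpen_mapsTo_closure_of_iterate {X : Type*} [TopologicalSpace X] [NormalSpace X]
    {f : X → X} (hf : Continuous f) {K U : Set X} (hK : IsClosed K) (hU : IsOpen U) (hKU : K ⊆ U)
    {q : ℕ} (hq : q ≠ 0) (hfq : MapsTo f^[q] (closure U) K) :
    ∃ V ⊆ U, IsOpen V ∧ MapsTo f (closure V) V ∧ U ∩ Function.fixedPoints f ⊆ V := by
  obtain ⟨g, hg0, hg1, -⟩ := exists_continuous_zero_one_of_isClosed hK hU.isClosed_compl
    (disjoint_compl_right_iff_subset.mpr hKU)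
  have hgK {x : X} (hx : x ∈ K) : g x = 0 := hg0 hx
  have hcont (i : ℕ) : Continuous fun x => q * g (f^[i] x) + i := by
    have := hf.iterate i
    fun_prop
  -- The offset `i / q` absorbs the shift of index when `f` is applied, so that `f` maps the closed
  -- condition `W` into the open one `V`.
  let V : Set X := ⋂ i ∈ Iio q, {x | q * g (f^[i] x) + i < q}
  let W : Set X := ⋂ i ∈ Iio q, {x | q * g (f^[i] x) + i ≤ q}
  have hVU : V ⊆ U := fun x hx => by
    by_contra hxU
    have hlt : q * g x + (0 : ℕ) < q := mem_iInter₂.mp hx 0 (Nat.pos_of_ne_zero hq)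
    simp [show g x = 1 from hg1 hxU] at hlt
  have hVW : closure V ⊆ W := closure_minimal
    (iInter₂_mono fun i _ => ofPred_subset_ofPred.mpr fun _ => le_of_lt)
    (isClosed_biInter fun i _ => isClosed_le (hcont i) continuous_const)
  refine ⟨V, hVU, (finite_Iio q).isOpen_biInter fun i _ => isOpen_lt (hcont i) continuous_const,
    fun x hx => mem_iInter₂.mpr fun i hi => ?_, fun x hx => mem_iInter₂.mpr fun i hi => ?_⟩
  · change q * g (f^[i + 1] x) + i < q
    rcases (Nat.succ_le_of_lt hi).lt_or_eq with hlt | heq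
    · have hle : q * g (f^[i + 1] x) + (i + 1 : ℕ) ≤ q := mem_iInter₂.mp (hVW hx) _ hlt
      push_cast at hle
      linarith
    · rw [show i + 1 = q from heq, hgK (hfq (closure_mono hVU hx))]
      simpa using hi
  · have hxK : x ∈ K := hx.2.iterate q ▸ hfq (subset_closure hx.1)
    change q * g (f^[i] x) + i < q
    rw [hx.2.iterate i, hgK hxK]
    simpa using hi

end Trapping

section IntersectionProperty

variable {κ : Set ℂ}

theorem IsEssentialCurve.isCompact (hκ : IsEssentialCurve κ) : IsCompact κ := by
  obtain ⟨φ, -, rfl, -⟩ := hκ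
  exact isCompact_range (by fun_prop)

theorem IsEssentialCurve.isPreconnected (hκ : IsEssentialCurve κ) : IsPreconnected κ := by
  obtain ⟨φ, -, rfl, -⟩ := hκ
  exact isPreconnected_range (by fun_prop)

theorem IsEssentialCurve.nonempty (hκ : IsEssentialCurve κ) : κ.Nonempty := by
  obtain ⟨φ, -, rfl, -⟩ := hκ
  exact range_nonempty _

theorem IsEssentialCurve.zero_notMem (hκ : IsEssentialCurve κ) : 0 ∉ κ := by
  obtain ⟨φ, -, rfl, -⟩ := hκ
  rintro ⟨x, hx⟩
  exact (φ x).2 hx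

theorem IsEssentialCurve.isBounded_connectedComponentIn_compl (hκ : IsEssentialCurve κ) :
    Bornology.IsBounded (connectedComponentIn κᶜ 0) := by
  obtain ⟨φ, -, rfl, hφ⟩ := hκ
  exact isBounded_connectedComponentIn_compl_range hφ

theorem IsEssentialCurve.exists_trapping_of_disjoint (hκ : IsEssentialCurve κ) {F : ℂ ≃ₜ ℂ}
    (hF : F 0 = 0) (hdisj : Disjoint κ (F '' κ)) :
    ∃ U, IsOpen U ∧ Bornology.IsBounded U ∧ 0 ∈ U ∧
      (MapsTo F (closure U) U ∨ MapsTo F.symm (closure U) U) := by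
  set U := connectedComponentIn κᶜ 0 with hU
  have hUb : Bornology.IsBounded U := hκ.isBounded_connectedComponentIn_compl
  have hFU : F '' U = connectedComponentIn (F '' κ)ᶜ 0 := by
    rw [hU, F.image_connectedComponentIn hκ.zero_notMem, F.image_compl, hF]
  refine ⟨U, hκ.isCompact.isClosed.isOpen_compl.connectedComponentIn, hUb,
    mem_connectedComponentIn hκ.zero_notMem, ?_⟩
  have h0 : 0 ∉ F '' κ := by
    rw [← F.preimage_symm]
    simpa [F.symm_apply_eq.mpr hF.symm] using hκ.zero_notMem
  rcases closure_connectedComponentIn_compl_subset_or_subset_or_union_eq_univ hκ.isCompact.isClosed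
    (hκ.isCompact.image F.continuous).isClosed hκ.isPreconnected
    (hκ.isPreconnected.image F F.continuous.continuousOn) hdisj hκ.zero_notMem h0 with h | h | h
  · rw [← hFU, ← F.image_closure] at h
    exact .inl (mapsTo_iff_image_subset.mpr h)
  · rw [← hFU, ← F.preimage_symm] at h
    exact .inr h
  · rw [← hFU] at h
    refine absurd (h ▸ hUb.union ?_) (NormedSpace.unbounded_univ ℝ ℂ)
    exact (hUb.isCompact_closure.image F.continuous).isBounded.subset (image_mono subset_closure)

theorem exists_isEssentialCurve_disjoint_image {F : ℂ → ℂ} (hF : Continuous F) (hF0 : F 0 = 0)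
    {U : Set ℂ} (hU : IsOpen U) (hUb : Bornology.IsBounded U) (h0 : 0 ∈ U) {q : ℕ} (hq : q ≠ 0)
    (hFq : MapsTo F^[q] (closure U) U) :
    ∃ κ, IsEssentialCurve κ ∧ Disjoint κ (F '' κ) := by
  obtain ⟨V, hVU, hV, hFV, hfix⟩ := exists_isOpen_mapsTo_closure_of_iterate hF
    (hUb.isCompact_closure.image (hF.iterate q)).isClosed hU hFq.image_subset hq
    (mapsTo_image _ _)
  have hVb : IsCompact (closure V) := (hUb.subset hVU).isCompact_closure
  obtain ⟨κ, hκ, hκV⟩ := exists_isEssentialCurve_subset_diff (hVb.image hF) hV hFV.image_subset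
    ⟨0, subset_closure (hfix ⟨h0, hF0⟩), hF0⟩
  refine ⟨κ, hκ, disjoint_left.mpr fun z hz hz' => (hκV hz).2 ?_⟩
  exact image_mono (fun w hw => subset_closure (hκV hw).1) hz'

theorem IntersectionProperty.not_mapsTo_closure_iterate {f : Ann → Ann}
    (hf : IntersectionProperty f) {F : ℂ → ℂ} (hF : Continuous F) (hF0 : F 0 = 0)
    (hFf : ∀ p, F (polar p) = polar (f p)) {U : Set ℂ} (hU : IsOpen U)
    (hUb : Bornology.IsBounded U) (h0 : 0 ∈ U) {q : ℕ} (hq : q ≠ 0) :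
    ¬MapsTo F^[q] (closure U) U := fun hFq => by
  obtain ⟨κ, hκ, hdisj⟩ := exists_isEssentialCurve_disjoint_image hF hF0 hU hUb h0 hq hFq
  exact not_disjoint_iff_nonempty_inter.mpr
    ((intersectionProperty_iff_of_semiconj hFf).mp hf κ hκ) hdisj

theorem coe_homeomorph_pow {X : Type*} [TopologicalSpace X] (F : X ≃ₜ X) (q : ℕ) :
    ⇑(F ^ q) = F^[q] :=
  hom_coe_pow _ rfl (fun _ _ => rfl) F q

theorem iterate_intersection_property_general (f : Ann ≃ₜ Ann) (hf : IntersectionProperty f)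
    (q : ℕ) : IntersectionProperty (f^[q]) := by
  obtain ⟨F, hF0, hF⟩ := hf.exists_planar_extension
  have hF0' : F.symm 0 = 0 := F.symm_apply_eq.mpr hF0.symm
  have hF' (p : Ann) : F.symm (polar p) = polar (f.symm p) := by simp [F.symm_apply_eq, hF]
  have hFq : Function.Semiconj (fun p => (polar p : ℂ)) f^[q] F^[q] :=
    Function.Semiconj.iterate_right (fun p => (hF p).symm) q
  refine (intersectionProperty_iff_of_semiconj fun p => (hFq p).symm).mpr fun κ hκ => ?_
  by_contra hempty
  have hq : q ≠ 0 := by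
    rintro rfl
    exact hempty (by simpa using hκ.nonempty)
  rw [← not_disjoint_iff_nonempty_inter, not_not, ← coe_homeomorph_pow] at hempty
  obtain ⟨U, hU, hUb, h0, htrap | htrap⟩ := hκ.exists_trapping_of_disjoint
    (by rw [coe_homeomorph_pow, Function.iterate_fixed hF0]) hempty
  · rw [coe_homeomorph_pow] at htrap
    exact hf.not_mapsTo_closure_iterate F.continuous hF0 hF hU hUb h0 hq htrap
  · rw [show (F ^ q).symm = F.symm ^ q from (inv_pow F q).symm, coe_homeomorph_pow] at htrap
    exact hf.symm.not_mapsTo_closure_iterate F.symm.continuous hF0' hF' hU hUb h0 hq htrap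

end IntersectionProperty

/-- Lemma 3.2: if `f` is a homeomorphism of the open annulus isotopic to the identity with
the intersection property, then `f^q` has the intersection property for every `q > 1`. -/
theorem iterate_intersection_property
    (f : Ann ≃ₜ Ann) (hiso : IsotopicToId f) (hint : IntersectionProperty f)
    (q : ℕ) (hq : 1 < q) :
    IntersectionProperty ((⇑f)^[q]) := by
  exact iterate_intersection_property_general f hint q
end
end
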